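/- arXiv:2012.14562 — 2 statements merged into one kernel-verified Lean document; each statement's English description precedes it below -/
import Mathlib

section
/- Let Q be the ground state on ℝ^N and let ρ be the unique radial Schwartz solution of L₊ρ = |x|²Q, where L₊ := −Δ + 1 − (1 + 4/N) Q^{4/N}. Then ∫_{ℝ^N} Q(x) ρ(x) dx = (1/2) ∫_{ℝ^N} |x|² Q(x)² dx, i.e. (Q, ρ)₂ = (1/2)‖|x|Q‖₂². -/
open MeasureTheory Filter Complex

noncomputable section

/-- The Laplacian `Δf = ∑ᵢ ∂ᵢ²f` on `ℝ^N`. -/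
def lapl {N : ℕ} {F : Type*} [NormedAddCommGroup F] [NormedSpace ℝ F]
    (f : EuclideanSpace ℝ (Fin N) → F) (x : EuclideanSpace ℝ (Fin N)) : F :=
  ∑ i : Fin N, fderiv ℝ (fun y => fderiv ℝ f y (EuclideanSpace.single i (1:ℝ))) x
    (EuclideanSpace.single i (1:ℝ))

/-- `|∇f(x)|² = ∑ᵢ |∂ᵢf(x)|²`. -/
def gradSq {N : ℕ} {F : Type*} [NormedAddCommGroup F] [NormedSpace ℝ F]
    (f : EuclideanSpace ℝ (Fin N) → F) (x : EuclideanSpace ℝ (Fin N)) : ℝ :=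
  ∑ i : Fin N, ‖fderiv ℝ f x (EuclideanSpace.single i (1:ℝ))‖ ^ 2

/-- `Q` is the ground state: a smooth, positive, radial solution of
`ΔQ − Q + Q^{1+4/N} = 0` with exponential decay. -/
def IsGroundState (N : ℕ) (Q : EuclideanSpace ℝ (Fin N) → ℝ) : Prop :=
  ContDiff ℝ (⊤ : ℕ∞) Q ∧ (∀ x, 0 < Q x) ∧ (∀ x y, ‖x‖ = ‖y‖ → Q x = Q y) ∧
  (∀ x, lapl Q x - Q x + Q x ^ ((1:ℝ) + 4 / N) = 0) ∧
  ∃ C c : ℝ, 0 < C ∧ 0 < c ∧ ∀ x, Q x ≤ C * Real.exp (-c * ‖x‖)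


open Topology

def dd {N : ℕ} (i : Fin N) (f : EuclideanSpace ℝ (Fin N) → ℝ) (x : EuclideanSpace ℝ (Fin N)) : ℝ :=
  fderiv ℝ f x (EuclideanSpace.single i (1:ℝ))

def eu {N : ℕ} (f : EuclideanSpace ℝ (Fin N) → ℝ) (x : EuclideanSpace ℝ (Fin N)) : ℝ :=
  fderiv ℝ f x x

theorem lapl_eq {N : ℕ} (f : EuclideanSpace ℝ (Fin N) → ℝ) (x : EuclideanSpace ℝ (Fin N)) :
    lapl f x = ∑ i, dd i (dd i f) x := rfl

theorem dd_smooth {N : ℕ} (i : Fin N) {f : EuclideanSpace ℝ (Fin N) → ℝ}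
    (hf : ContDiff ℝ (⊤ : ℕ∞) f) : ContDiff ℝ (⊤ : ℕ∞) (dd i f) := by
  unfold dd
  exact (hf.fderiv_right (m := (⊤ : ℕ∞)) (by simp)).clm_apply contDiff_const

theorem eu_smooth {N : ℕ} {f : EuclideanSpace ℝ (Fin N) → ℝ}
    (hf : ContDiff ℝ (⊤ : ℕ∞) f) : ContDiff ℝ (⊤ : ℕ∞) (eu f) := by
  unfold eu
  exact (hf.fderiv_right (m := (⊤ : ℕ∞)) (by simp)).clm_apply contDiff_id

theorem eu_sum {N : ℕ} (f : EuclideanSpace ℝ (Fin N) → ℝ) (x : EuclideanSpace ℝ (Fin N)) :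
    eu f x = ∑ i, x i * dd i f x := by
  unfold eu dd
  conv_lhs => arg 2; rw [← (EuclideanSpace.basisFun (Fin N) ℝ).sum_repr x]
  simp only [map_sum, map_smul, smul_eq_mul]
  simp

theorem dd_supp {N : ℕ} (i : Fin N) {f : EuclideanSpace ℝ (Fin N) → ℝ}
    (hf : HasCompactSupport f) : HasCompactSupport (dd i f) :=
  hf.fderiv_apply ℝ _

theorem eu_supp {N : ℕ} {f : EuclideanSpace ℝ (Fin N) → ℝ}
    (hf : HasCompactSupport f) : HasCompactSupport (eu f) := by
  refine (hf.fderiv (𝕜 := ℝ)).mono ?_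
  intro x hx h
  apply hx
  simp [eu, h]

theorem dd_mul {N : ℕ} (i : Fin N) {f g : EuclideanSpace ℝ (Fin N) → ℝ}
    (hf : Differentiable ℝ f) (hg : Differentiable ℝ g) :
    dd i (fun x => f x * g x) = fun x => f x * dd i g x + dd i f x * g x := by
  funext x
  unfold dd
  rw [fderiv_fun_mul (hf x) (hg x)]
  simp [mul_comm]

theorem eu_mul {N : ℕ} {f g : EuclideanSpace ℝ (Fin N) → ℝ} 
    (hf : Differentiable ℝ f) (hg : Differentiable ℝ g) :
    eu (fun x => f x * g x) = fun x => f x * eu g x + eu f x * g x := by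
  funext x
  unfold eu
  rw [fderiv_fun_mul (hf x) (hg x)]
  simp [mul_comm]

theorem dd_add {N : ℕ} (i : Fin N) {f g : EuclideanSpace ℝ (Fin N) → ℝ}
    (hf : Differentiable ℝ f) (hg : Differentiable ℝ g) :
    dd i (fun x => f x + g x) = fun x => dd i f x + dd i g x := by
  funext x
  unfold dd
  rw [fderiv_fun_add (hf x) (hg x)]
  simp

theorem dd_ibp {N : ℕ} (i : Fin N) {f g : EuclideanSpace ℝ (Fin N) → ℝ}
    (hf : ContDiff ℝ 1 f) (hg : ContDiff ℝ 1 g) (hs : HasCompactSupport f) :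
    ∫ x, f x * dd i g x = - ∫ x, dd i f x * g x := by
  have c1 : Continuous (dd i f) := (hf.continuous_fderiv (by simp)).clm_apply continuous_const
  have c2 : Continuous (dd i g) := (hg.continuous_fderiv (by simp)).clm_apply continuous_const
  apply integral_mul_fderiv_eq_neg_fderiv_mul_of_integrable
  · exact (c1.mul hg.continuous).integrable_of_hasCompactSupport ((dd_supp i hs).mul_right)
  · exact (hf.continuous.mul c2).integrable_of_hasCompactSupport (hs.mul_right)
  · exact (hf.continuous.mul hg.continuous).integrable_of_hasCompactSupport (hs.mul_right)
  · exact fun x _ => hf.differentiable (by simp) x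
  · exact fun x _ => hg.differentiable (by simp) x

theorem dd_scale {N : ℕ} (i : Fin N) {f : EuclideanSpace ℝ (Fin N) → ℝ} (c : ℝ) :
    dd i (fun x => f (c • x)) = fun x => c * dd i f (c • x) := by
  funext x
  unfold dd
  rw [fderiv_comp_smul]
  simp

theorem eu_scale {N : ℕ} {f : EuclideanSpace ℝ (Fin N) → ℝ} (c : ℝ) :
    eu (fun x => f (c • x)) = fun x => eu f (c • x) := by
  funext x
  unfold eu
  rw [fderiv_comp_smul]
  simp

theorem dd_cmul {N : ℕ} (i : Fin N) {f : EuclideanSpace ℝ (Fin N) → ℝ} (c : ℝ)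
    (hf : Differentiable ℝ f) :
    dd i (fun x => c * f x) = fun x => c * dd i f x := by
  funext x
  unfold dd
  rw [fderiv_const_mul (hf x)]
  simp

theorem cutoff (N : ℕ) : ∃ (χ : ℕ → EuclideanSpace ℝ (Fin N) → ℝ) (C : ℝ),
    (∀ n, ContDiff ℝ (⊤ : ℕ∞) (χ n)) ∧ (∀ n, HasCompactSupport (χ n)) ∧
    (∀ x, ∀ᶠ n in atTop, χ n =ᶠ[𝓝 x] fun _ => 1) ∧ (∀ n x, |χ n x| ≤ C) ∧
    (∀ n i x, |dd i (χ n) x| ≤ C) ∧ (∀ n i x, |dd i (dd i (χ n)) x| ≤ C) ∧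
    (∀ n x, |eu (χ n) x| ≤ C) := by
  let b : ContDiffBump (0 : EuclideanSpace ℝ (Fin N)) := ⟨1, 2, by norm_num, by norm_num⟩
  have hb : ContDiff ℝ (⊤ : ℕ∞) b := b.contDiff
  have hs : HasCompactSupport b := b.hasCompactSupport
  obtain ⟨C0, h0⟩ := hs.exists_bound_of_continuous hb.continuous
  choose C1 h1 using fun i => (dd_supp i hs).exists_bound_of_continuous (dd_smooth i hb).continuous
  choose C2 h2 using fun i => (dd_supp i (dd_supp i hs)).exists_bound_of_continuous
    (dd_smooth i (dd_smooth i hb)).continuous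
  obtain ⟨C3, h3⟩ := (eu_supp hs).exists_bound_of_continuous (eu_smooth hb).continuous
  simp only [Real.norm_eq_abs] at h0 h1 h2 h3
  have p0 : 0 ≤ C0 := (abs_nonneg _).trans (h0 0)
  have p1 : ∀ i, 0 ≤ C1 i := fun i => (abs_nonneg _).trans (h1 i 0)
  have p2 : ∀ i, 0 ≤ C2 i := fun i => (abs_nonneg _).trans (h2 i 0)
  have p3 : 0 ≤ C3 := (abs_nonneg _).trans (h3 0)
  have q1 : ∀ i, C1 i ≤ ∑ i, C1 i := fun i =>
    Finset.single_le_sum (fun j _ => p1 j) (Finset.mem_univ i)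
  have q2 : ∀ i, C2 i ≤ ∑ i, C2 i := fun i =>
    Finset.single_le_sum (fun j _ => p2 j) (Finset.mem_univ i)
  have s1 : 0 ≤ ∑ i, C1 i := Finset.sum_nonneg fun i _ => p1 i
  have s2 : 0 ≤ ∑ i, C2 i := Finset.sum_nonneg fun i _ => p2 i
  have hc : ∀ n : ℕ, 0 < ((n : ℝ) + 1)⁻¹ ∧ ((n : ℝ) + 1)⁻¹ ≤ 1 := fun n =>
    ⟨by positivity, inv_le_one_of_one_le₀ (by linarith [n.cast_nonneg (α := ℝ)])⟩
  refine ⟨fun n x => b (((n : ℝ) + 1)⁻¹ • x), C0 + ∑ i, C1 i + ∑ i, C2 i + C3, ?_, ?_, ?_, ?_, ?_,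
    ?_, ?_⟩
  · intro n
    exact hb.comp (contDiff_const_smul _)
  · intro n
    exact hs.comp_smul (hc n).1.ne'
  · intro x
    have : Tendsto (fun n : ℕ => ((n : ℝ) + 1)⁻¹ • x) atTop (𝓝 ((0:ℝ) • x)) := by
      refine Tendsto.smul_const ?_ x
      simpa using tendsto_one_div_add_atTop_nhds_zero_nat (𝕜 := ℝ)
    rw [zero_smul] at this
    filter_upwards [this.eventually (b.eventuallyEq_one.eventually_nhds)] with n hn
    have hcont : Tendsto (fun y : EuclideanSpace ℝ (Fin N) => ((n : ℝ) + 1)⁻¹ • y) (𝓝 x)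
      (𝓝 (((n : ℝ) + 1)⁻¹ • x)) := (continuous_const_smul _).tendsto x
    exact hcont.eventually hn
  · intro n x
    linarith [h0 (((n : ℝ) + 1)⁻¹ • x)]
  · intro n i x
    rw [dd_scale i (f := b), abs_mul, abs_of_pos (hc n).1]
    have := mul_le_mul (hc n).2 (h1 i (((n : ℝ) + 1)⁻¹ • x)) (abs_nonneg _) zero_le_one
    linarith [q1 i]
  · intro n i x
    have hdf : Differentiable ℝ (fun x => dd i b (((n : ℝ) + 1)⁻¹ • x)) :=
      ((dd_smooth i hb).comp (contDiff_const_smul _)).differentiable (by simp)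
    rw [dd_scale i (f := b), dd_cmul i _ hdf, dd_scale i (f := dd i b), abs_mul, abs_mul, abs_of_pos (hc n).1]
    have := mul_le_mul (hc n).2 (h2 i (((n : ℝ) + 1)⁻¹ • x)) (abs_nonneg _) zero_le_one
    have := mul_le_mul (hc n).2 this (mul_nonneg (hc n).1.le (abs_nonneg _)) zero_le_one
    linarith [q2 i]
  · intro n x
    rw [eu_scale (f := b)]
    linarith [h3 (((n : ℝ) + 1)⁻¹ • x)]

theorem dd_congr {N : ℕ} (i : Fin N) {f g : EuclideanSpace ℝ (Fin N) → ℝ}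
    {x : EuclideanSpace ℝ (Fin N)} (h : f =ᶠ[𝓝 x] g) : dd i f =ᶠ[𝓝 x] dd i g := by
  filter_upwards [h.fderiv (𝕜 := ℝ)] with y hy
  simp [dd, hy]

theorem div_lemma {N : ℕ} (w : EuclideanSpace ℝ (Fin N) → ℝ) (hw : ContDiff ℝ 1 w)
    (hi : Integrable w) (he : Integrable (eu w)) :
    ∫ x, eu w x = - (N * ∫ x, w x) := by
  obtain ⟨χ, C, hχ, hs, h1, b0, -, -, b3⟩ := cutoff N
  have hd : ∀ n, Differentiable ℝ (χ n) := fun n => (hχ n).differentiable (by simp)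
  have key : ∀ n, ∫ x, χ n x * eu w x = - ∫ x, (N * χ n x + eu (χ n) x) * w x := by
    intro n
    have cw : ∀ i, Continuous (dd i w) := fun i =>
      (hw.continuous_fderiv (by simp)).clm_apply continuous_const
    have hx : ∀ i : Fin N, ContDiff ℝ (⊤ : ℕ∞) (fun x : EuclideanSpace ℝ (Fin N) => x i) := by
      intro i; fun_prop
    have hxd : ∀ i : Fin N, dd i (fun x : EuclideanSpace ℝ (Fin N) => x i) = fun _ => 1 := by
      intro i
      funext x
      have : HasFDerivAt (fun x : EuclideanSpace ℝ (Fin N) => x i)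
        (EuclideanSpace.proj (𝕜 := ℝ) i) x := (EuclideanSpace.proj (𝕜 := ℝ) i).hasFDerivAt
      simp [dd, this.fderiv]
    have hg : ∀ i : Fin N, ContDiff ℝ (⊤ : ℕ∞) (fun x => χ n x * x i) := fun i =>
      (hχ n).mul (hx i)
    have hgs : ∀ i : Fin N, HasCompactSupport (fun x => χ n x * x i) := fun i => (hs n).mul_right
    have e1 : ∀ x, χ n x * eu w x = ∑ i, (χ n x * x i) * dd i w x := by
      intro x
      rw [eu_sum, Finset.mul_sum]
      simp only [mul_assoc]
    have e2 : ∀ x, (N * χ n x + eu (χ n) x) * w x = ∑ i, dd i (fun x => χ n x * x i) x * w x := by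
      intro x
      rw [← Finset.sum_mul]
      congr 1
      have : ∀ i, dd i (fun x => χ n x * x i) x = χ n x + x i * dd i (χ n) x := by
        intro i
        rw [dd_mul i (hd n) ((hx i).differentiable (by simp)), hxd]
        ring
      simp only [this, Finset.sum_add_distrib, eu_sum]
      simp
    simp only [e1, e2]
    rw [integral_finsetSum, integral_finsetSum, ← Finset.sum_neg_distrib]
    · exact Finset.sum_congr rfl fun i _ => dd_ibp i ((hg i).of_le (by simp)) hw (hgs i)
    · exact fun i _ => ((dd_smooth i (hg i)).continuous.mul
        hw.continuous).integrable_of_hasCompactSupport (dd_supp i (hgs i)).mul_right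
    · exact fun i _ => ((hg i).continuous.mul (cw i)).integrable_of_hasCompactSupport
        (hgs i).mul_right
  have t1 : Tendsto (fun n => ∫ x, χ n x * eu w x) atTop (𝓝 (∫ x, eu w x)) := by
    refine tendsto_integral_of_dominated_convergence (fun x => C * |eu w x|) ?_ ?_ ?_ ?_
    · exact fun n => (hχ n).continuous.aestronglyMeasurable.mul he.1
    · exact he.abs.const_mul C
    · intro n
      refine ae_of_all _ fun x => ?_
      rw [Real.norm_eq_abs, abs_mul]
      exact mul_le_mul_of_nonneg_right (b0 n x) (abs_nonneg _)
    · refine ae_of_all _ fun x => ?_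
      refine tendsto_const_nhds.congr' ?_
      filter_upwards [h1 x] with n hn
      rw [hn.eq_of_nhds]; simp
  have t2 : Tendsto (fun n => ∫ x, (N * χ n x + eu (χ n) x) * w x) atTop (𝓝 (∫ x, N * w x)) := by
    refine tendsto_integral_of_dominated_convergence (fun x => (N * C + C) * |w x|) ?_ ?_ ?_ ?_
    · exact fun n => ((continuous_const.mul (hχ n).continuous).add
        (eu_smooth (hχ n)).continuous).aestronglyMeasurable.mul hi.1
    · exact hi.abs.const_mul _
    · intro n
      refine ae_of_all _ fun x => ?_
      rw [Real.norm_eq_abs, abs_mul]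
      refine mul_le_mul_of_nonneg_right ((abs_add_le _ _).trans ?_) (abs_nonneg _)
      rw [abs_mul, Nat.abs_cast]
      exact add_le_add (mul_le_mul_of_nonneg_left (b0 n x) (Nat.cast_nonneg _)) (b3 n x)
    · refine ae_of_all _ fun x => ?_
      refine tendsto_const_nhds.congr' ?_
      filter_upwards [h1 x] with n hn
      rw [hn.eq_of_nhds]
      have : eu (χ n) x = 0 := by
        rw [eu, hn.fderiv_eq]; simp
      rw [this]; simp
  have := tendsto_nhds_unique t1 ((t2.neg).congr fun n => (key n).symm)
  rw [this, integral_const_mul]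

theorem lapl_lemma {N : ℕ} (Q : EuclideanSpace ℝ (Fin N) → ℝ) (hQ : ContDiff ℝ (⊤ : ℕ∞) Q)
    (B : ℝ) (hB : ∀ x, |Q x| ≤ B) (hL : ∀ x, |lapl Q x| ≤ B)
    (φ : SchwartzMap (EuclideanSpace ℝ (Fin N)) ℝ) :
    ∫ x, lapl Q x * φ x = ∫ x, Q x * lapl φ x := by
  obtain ⟨χ, C, hχ, hs, h1, b0, b1, b2, -⟩ := cutoff N
  have hφ : ContDiff ℝ (⊤ : ℕ∞) φ := φ.smooth _
  have hd : ∀ n, Differentiable ℝ (χ n) := fun n => (hχ n).differentiable (by simp)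
  have hφd : Differentiable ℝ φ := hφ.differentiable (by simp)
  have hC : 0 ≤ C := (abs_nonneg _).trans (b0 0 0)
  have hB0 : 0 ≤ B := (abs_nonneg _).trans (hB 0)
  have sd : ∀ i, ∃ g : SchwartzMap (EuclideanSpace ℝ (Fin N)) ℝ, ⇑g = dd i φ := fun i =>
    ⟨SchwartzMap.evalCLM ℝ (EuclideanSpace ℝ (Fin N)) ℝ (EuclideanSpace.single i (1:ℝ))
      (SchwartzMap.fderivCLM ℝ (EuclideanSpace ℝ (Fin N)) ℝ φ), rfl⟩
  have sdd : ∀ i, ∃ g : SchwartzMap (EuclideanSpace ℝ (Fin N)) ℝ, ⇑g = dd i (dd i φ) := by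
    intro i
    obtain ⟨g, hg⟩ := sd i
    rw [← hg]
    exact ⟨SchwartzMap.evalCLM ℝ (EuclideanSpace ℝ (Fin N)) ℝ (EuclideanSpace.single i (1:ℝ))
      (SchwartzMap.fderivCLM ℝ (EuclideanSpace ℝ (Fin N)) ℝ g), rfl⟩
  have id1 : ∀ i, Integrable (dd i φ) := fun i => by
    obtain ⟨g, hg⟩ := sd i
    rw [← hg]; exact g.integrable
  have id2 : ∀ i, Integrable (dd i (dd i φ)) := fun i => by
    obtain ⟨g, hg⟩ := sdd i
    rw [← hg]; exact g.integrable
  have hψ : ∀ n, ContDiff ℝ (⊤ : ℕ∞) (fun x => χ n x * φ x) := fun n => (hχ n).mul hφ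
  have hψs : ∀ n, HasCompactSupport (fun x => χ n x * φ x) := fun n => (hs n).mul_right
  have lsm : ∀ {f : EuclideanSpace ℝ (Fin N) → ℝ}, ContDiff ℝ (⊤ : ℕ∞) f → Continuous (lapl f) := by
    intro f hf
    change Continuous fun x => ∑ i, dd i (dd i f) x
    exact continuous_finsetSum _ fun i _ => (dd_smooth i (dd_smooth i hf)).continuous
  have key : ∀ n, ∫ x, lapl Q x * (χ n x * φ x) = ∫ x, Q x * lapl (fun x => χ n x * φ x) x := by
    intro n
    simp only [lapl_eq, Finset.sum_mul, Finset.mul_sum]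
    rw [integral_finsetSum, integral_finsetSum]
    · refine Finset.sum_congr rfl fun i _ => ?_
      have e1 := dd_ibp i ((hψ n).of_le (by simp)) ((dd_smooth i hQ).of_le (by simp)) (hψs n)
      have e2 := dd_ibp i ((dd_smooth i (hψ n)).of_le (by simp)) (hQ.of_le (by simp))
        (dd_supp i (hψs n))
      simp only [mul_comm] at e1 e2 ⊢
      rw [e1, e2, neg_neg]
    · exact fun i _ => (hQ.continuous.mul (dd_smooth i (dd_smooth i
        (hψ n))).continuous).integrable_of_hasCompactSupport
          (dd_supp i (dd_supp i (hψs n))).mul_left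
    · exact fun i _ => ((dd_smooth i (dd_smooth i hQ)).continuous.mul
        (hψ n).continuous).integrable_of_hasCompactSupport (hψs n).mul_left
  have t1 : Tendsto (fun n => ∫ x, lapl Q x * (χ n x * φ x)) atTop
      (𝓝 (∫ x, lapl Q x * φ x)) := by
    refine tendsto_integral_of_dominated_convergence (fun x => B * (C * |φ x|)) ?_ ?_ ?_ ?_
    · exact fun n => ((lsm hQ).mul (hψ n).continuous).aestronglyMeasurable
    · exact (φ.integrable.abs.const_mul C).const_mul B
    · intro n
      refine ae_of_all _ fun x => ?_
      rw [Real.norm_eq_abs, abs_mul, abs_mul]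
      exact mul_le_mul (hL x) (mul_le_mul_of_nonneg_right (b0 n x) (abs_nonneg _))
        (by positivity) hB0
    · refine ae_of_all _ fun x => ?_
      refine tendsto_const_nhds.congr' ?_
      filter_upwards [h1 x] with n hn
      rw [hn.eq_of_nhds]; simp
  have t2 : Tendsto (fun n => ∫ x, Q x * lapl (fun x => χ n x * φ x) x) atTop
      (𝓝 (∫ x, Q x * lapl φ x)) := by
    refine tendsto_integral_of_dominated_convergence
      (fun x => B * ∑ i, (C * |dd i (dd i φ) x| + 2 * (C * |dd i φ x|) + C * |φ x|)) ?_ ?_ ?_ ?_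
    · exact fun n => (hQ.continuous.mul (lsm (hψ n))).aestronglyMeasurable
    · refine Integrable.const_mul (integrable_finsetSum _ fun i _ => ?_) _
      exact (((id2 i).abs.const_mul C).add (((id1 i).abs.const_mul C).const_mul 2)).add
        (φ.integrable.abs.const_mul C)
    · intro n
      refine ae_of_all _ fun x => ?_
      rw [Real.norm_eq_abs, abs_mul]
      refine mul_le_mul (hB x) ?_ (abs_nonneg _) hB0
      rw [lapl_eq]
      refine (Finset.abs_sum_le_sum_abs _ _).trans (Finset.sum_le_sum fun i _ => ?_)
      have dχ : Differentiable ℝ (dd i (χ n)) := (dd_smooth i (hχ n)).differentiable (by simp)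
      have dφ : Differentiable ℝ (dd i φ) := (dd_smooth i hφ).differentiable (by simp)
      rw [dd_mul i (hd n) hφd, dd_add i ((hd n).fun_mul dφ) (dχ.fun_mul hφd), dd_mul i (hd n) dφ,
        dd_mul i dχ hφd]
      have m0 := mul_le_mul_of_nonneg_right (b0 n x) (abs_nonneg (dd i (dd i φ) x))
      have m1 := mul_le_mul_of_nonneg_right (b1 n i x) (abs_nonneg (dd i φ x))
      have m2 := mul_le_mul_of_nonneg_right (b2 n i x) (abs_nonneg (φ x))
      rw [← abs_mul] at m0 m1 m2
      refine (abs_add_le _ _).trans ?_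
      have a1 := abs_add_le (χ n x * dd i (dd i φ) x) (dd i (χ n) x * dd i φ x)
      have a2 := abs_add_le (dd i (χ n) x * dd i φ x) (dd i (dd i (χ n)) x * φ x)
      linarith
    · refine ae_of_all _ fun x => ?_
      refine tendsto_const_nhds.congr' ?_
      filter_upwards [h1 x] with n hn
      congr 1
      rw [lapl_eq, lapl_eq]
      refine Finset.sum_congr rfl fun i _ => ?_
      have : φ =ᶠ[𝓝 x] (fun x => χ n x * φ x) := by
        filter_upwards [hn] with y hy
        rw [hy]; simp
      exact (dd_congr i (dd_congr i this)).eq_of_nhds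
  exact tendsto_nhds_unique t1 (t2.congr fun n => (key n).symm)

theorem dd_eu {N : ℕ} (i : Fin N) {f : EuclideanSpace ℝ (Fin N) → ℝ}
    (hf : ContDiff ℝ (⊤ : ℕ∞) f) : dd i (eu f) = fun x => eu (dd i f) x + dd i f x := by
  funext x
  have hd : DifferentiableAt ℝ (fderiv ℝ f) x :=
    (hf.fderiv_right (m := (⊤ : ℕ∞)) (by simp)).differentiable (by simp) x
  have hsym : IsSymmSndFDerivAt ℝ f x :=
    hf.contDiffAt.isSymmSndFDerivAt (by
      simp only [minSmoothness_of_isRCLikeNormedField]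
      exact WithTop.coe_le_coe.2 (le_top : (2:ℕ∞) ≤ ⊤))
  unfold eu dd
  rw [fderiv_clm_apply hd differentiableAt_fun_id, fderiv_clm_apply hd (differentiableAt_const _)]
  simp [hsym.eq, add_comm]
  try exact hsym.eq _ _

theorem lapl_eu {N : ℕ} {f : EuclideanSpace ℝ (Fin N) → ℝ}
    (hf : ContDiff ℝ (⊤ : ℕ∞) f) (x) : lapl (eu f) x = eu (lapl f) x + 2 * lapl f x := by
  have h : ∀ i, dd i (dd i (eu f)) x = eu (dd i (dd i f)) x + 2 * dd i (dd i f) x := by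
    intro i
    have h1 := dd_smooth i hf
    rw [dd_eu i hf, dd_add i ((eu_smooth h1).differentiable (by simp))
      (h1.differentiable (by simp)), dd_eu i h1]
    ring
  have h2 : eu (lapl f) x = ∑ i, eu (dd i (dd i f)) x := by
    change fderiv ℝ (fun x => ∑ i, dd i (dd i f) x) x x = _
    rw [fderiv_fun_sum fun i _ => (dd_smooth i (dd_smooth i hf)).differentiable (by simp) x]
    simp [eu]
  rw [h2, lapl_eq, lapl_eq, Finset.mul_sum, ← Finset.sum_add_distrib]
  exact Finset.sum_congr rfl fun i _ => h i

theorem sch_dd {N : ℕ} (i : Fin N) (φ : SchwartzMap (EuclideanSpace ℝ (Fin N)) ℝ) :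
    ∃ g : SchwartzMap (EuclideanSpace ℝ (Fin N)) ℝ, ⇑g = dd i φ :=
  ⟨SchwartzMap.evalCLM ℝ (EuclideanSpace ℝ (Fin N)) ℝ (EuclideanSpace.single i (1:ℝ))
      (SchwartzMap.fderivCLM ℝ (EuclideanSpace ℝ (Fin N)) ℝ φ), rfl⟩

theorem sch_eu {N : ℕ} (φ : SchwartzMap (EuclideanSpace ℝ (Fin N)) ℝ) :
    ∃ g : SchwartzMap (EuclideanSpace ℝ (Fin N)) ℝ, ⇑g = eu φ :=
  ⟨SchwartzMap.bilinLeftCLM (𝕜 := ℝ)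
    (ContinuousLinearMap.id ℝ (EuclideanSpace ℝ (Fin N) →L[ℝ] ℝ))
      (Function.HasTemperateGrowth.id' (E := EuclideanSpace ℝ (Fin N)))
      (SchwartzMap.fderivCLM ℝ (EuclideanSpace ℝ (Fin N)) ℝ φ), rfl⟩

theorem sch_lapl {N : ℕ} (φ : SchwartzMap (EuclideanSpace ℝ (Fin N)) ℝ) :
    ∃ g : SchwartzMap (EuclideanSpace ℝ (Fin N)) ℝ, ⇑g = lapl φ := by
  have : ∀ i, ∃ g : SchwartzMap (EuclideanSpace ℝ (Fin N)) ℝ, ⇑g = dd i (dd i φ) := by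
    intro i
    obtain ⟨g, hg⟩ := sch_dd i φ
    rw [← hg]
    exact sch_dd i g
  choose g hg using this
  refine ⟨∑ i, g i, ?_⟩
  funext x
  rw [sum_apply, lapl_eq]
  simp only [hg]

theorem eu_add {N : ℕ} {f g : EuclideanSpace ℝ (Fin N) → ℝ}
    (hf : Differentiable ℝ f) (hg : Differentiable ℝ g) :
    eu (fun x => f x + g x) = fun x => eu f x + eu g x := by
  funext x
  unfold eu
  rw [fderiv_fun_add (hf x) (hg x)]
  simp

theorem eu_sub {N : ℕ} {f g : EuclideanSpace ℝ (Fin N) → ℝ}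
    (hf : Differentiable ℝ f) (hg : Differentiable ℝ g) :
    eu (fun x => f x - g x) = fun x => eu f x - eu g x := by
  funext x
  unfold eu
  rw [fderiv_fun_sub (hf x) (hg x)]
  simp

theorem eu_cmul {N : ℕ} {f : EuclideanSpace ℝ (Fin N) → ℝ} (c : ℝ)
    (hf : Differentiable ℝ f) :
    eu (fun x => c * f x) = fun x => c * eu f x := by
  funext x
  unfold eu
  rw [fderiv_const_mul (hf x)]
  simp

theorem eu_normsq {N : ℕ} :
    eu (fun x : EuclideanSpace ℝ (Fin N) => ‖x‖ ^ 2) = fun x => 2 * ‖x‖ ^ 2 := by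
  funext x
  unfold eu
  rw [fderiv_norm_sq_apply]
  simp

theorem bdd_int {N : ℕ} {f g : EuclideanSpace ℝ (Fin N) → ℝ} (B : ℝ) (hf : Continuous f)
    (hB : ∀ x, |f x| ≤ B) (hg : Integrable g) : Integrable (fun x => f x * g x) :=
  hg.bdd_mul hf.aestronglyMeasurable (ae_of_all _ hB)

/-- if `ρ` is the radial Schwartz solution of `L₊ρ = |x|²Q`, then
`(Q, ρ)₂ = ½ ‖|x|Q‖₂²`. -/
theorem Q_rho_inner (N : ℕ) (hN : 1 ≤ N) (Q : EuclideanSpace ℝ (Fin N) → ℝ)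
    (hQ : IsGroundState N Q) (ρ : SchwartzMap (EuclideanSpace ℝ (Fin N)) ℝ)
    (hρrad : ∀ x y, ‖x‖ = ‖y‖ → ρ x = ρ y)
    (hρ : ∀ x, -lapl (⇑ρ) x + ρ x - (1 + 4 / N) * Q x ^ ((4:ℝ) / N) * ρ x = ‖x‖ ^ 2 * Q x) :
    ∫ x, Q x * ρ x = (1 / 2) * ∫ x, ‖x‖ ^ 2 * (Q x) ^ 2 := by
  obtain ⟨hQs, hQpos, -, hQeq, C, c, hC, hc, hQb⟩ := hQ
  have hN0 : (0:ℝ) < N := by exact_mod_cast hN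
  set s : ℝ := 4 / N with hs
  have hs0 : 0 < s := by positivity
  have hsN : (N:ℝ) * s = 4 := by rw [hs]; field_simp
  set P : EuclideanSpace ℝ (Fin N) → ℝ := fun x => Q x ^ s with hP
  have hPs : ContDiff ℝ (⊤ : ℕ∞) P := hQs.rpow_const_of_ne fun x => (hQpos x).ne'
  have hQC : ∀ x, Q x ≤ C := fun x => (hQb x).trans (by
    have : Real.exp (-c * ‖x‖) ≤ 1 := Real.exp_le_one_iff.2 (by nlinarith [norm_nonneg x])
    nlinarith)
  have hP0 : ∀ x, 0 ≤ P x := fun x => Real.rpow_nonneg (hQpos x).le _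
  have hPC : ∀ x, P x ≤ C ^ s := fun x => Real.rpow_le_rpow (hQpos x).le (hQC x) hs0.le
  have hCs : 0 ≤ C ^ s := Real.rpow_nonneg hC.le _
  have hlQ : ∀ x, lapl Q x = Q x - Q x * P x := by
    intro x
    have := hQeq x
    rw [Real.rpow_add (hQpos x), Real.rpow_one] at this
    simp only [hP]
    linarith
  have hlr : ∀ x, lapl ρ x = ρ x - (1 + s) * (P x * ρ x) - ‖x‖ ^ 2 * Q x := by
    intro x
    have := hρ x
    simp only [hP]
    linarith
  have hQabs : ∀ x, |Q x| ≤ C := fun x => by rw [abs_of_pos (hQpos x)]; exact hQC x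
  have hPabs : ∀ x, |P x| ≤ C ^ s := fun x => by rw [abs_of_nonneg (hP0 x)]; exact hPC x
  have hB1 : ∀ x, |Q x| ≤ C + C * C ^ s := fun x =>
    (hQabs x).trans (by nlinarith)
  have hB2 : ∀ x, |lapl Q x| ≤ C + C * C ^ s := fun x => by
    rw [hlQ]
    refine (abs_sub _ _).trans (add_le_add (hQabs x) ?_)
    rw [abs_mul]
    exact mul_le_mul (hQabs x) (hPabs x) (abs_nonneg _) hC.le
  have hρs : ContDiff ℝ (⊤ : ℕ∞) ρ := ρ.smooth _
  obtain ⟨er, her⟩ := sch_eu ρ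
  obtain ⟨lr, hlr'⟩ := sch_lapl ρ
  obtain ⟨ler, hler⟩ := sch_lapl er
  have lQc : Continuous (lapl Q) := by
    have : lapl Q = fun x => Q x - Q x * P x := funext hlQ
    rw [this]
    exact hQs.continuous.sub (hQs.continuous.mul hPs.continuous)
  have I1 : Integrable (fun x => Q x * ρ x) := bdd_int C hQs.continuous hQabs ρ.integrable
  have IP : Integrable (fun x => P x * ρ x) := bdd_int _ hPs.continuous hPabs ρ.integrable
  have I2 : Integrable (fun x => Q x * (P x * ρ x)) := bdd_int C hQs.continuous hQabs IP
  have Il : Integrable (lapl ρ) := by rw [← hlr']; exact lr.integrable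
  have I3 : Integrable (fun x => ‖x‖ ^ 2 * Q x ^ 2) := by
    have := bdd_int C hQs.continuous hQabs ((ρ.integrable.sub (IP.const_mul (1 + s))).sub Il)
    refine this.congr (ae_of_all _ fun x => ?_)
    simp only [Pi.sub_apply]
    rw [hlr]; ring
  have Ia0 : Integrable (fun x => lapl Q x * ρ x) := bdd_int _ lQc hB2 ρ.integrable
  have Ib0 : Integrable (fun x => Q x * lapl ρ x) := bdd_int C hQs.continuous hQabs Il
  have Ia : Integrable (fun x => lapl Q x * er x) := bdd_int _ lQc hB2 er.integrable
  have Ib : Integrable (fun x => Q x * lapl er x) := by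
    rw [← hler]
    exact bdd_int C hQs.continuous hQabs ler.integrable
  have L0 := lapl_lemma Q hQs _ hB1 hB2 ρ
  have L1 := lapl_lemma Q hQs _ hB1 hB2 er
  -- first identity
  have E0 : ∫ x, (lapl Q x * ρ x - Q x * lapl ρ x) =
      ∫ x, (s * (Q x * (P x * ρ x)) + ‖x‖ ^ 2 * Q x ^ 2) := by
    congr 1
    funext x
    rw [hlQ, hlr]; ring
  rw [integral_sub Ia0 Ib0, integral_add (I2.const_mul s) I3, integral_const_mul] at E0
  -- second identity
  set w : EuclideanSpace ℝ (Fin N) → ℝ :=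
    fun x => s * (Q x * (P x * ρ x)) + 1 / 2 * (‖x‖ ^ 2 * (Q x * Q x)) with hw
  have hns : ContDiff ℝ (⊤ : ℕ∞) (fun x : EuclideanSpace ℝ (Fin N) => ‖x‖ ^ 2) :=
    contDiff_norm_sq ℝ
  have dn := hns.differentiable (by simp)
  have dQ := hQs.differentiable (by simp)
  have dP := hPs.differentiable (by simp)
  have dρ := hρs.differentiable (by simp)
  have hws : ContDiff ℝ (⊤ : ℕ∞) w := by
    exact (contDiff_const.mul (hQs.mul (hPs.mul hρs))).add
      (contDiff_const.mul (hns.mul (hQs.mul hQs)))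
  have Iw : Integrable w := by
    refine ((I2.const_mul s).add (I3.const_mul (1/2))).congr (ae_of_all _ fun x => ?_)
    simp only [hw, Pi.add_apply]; ring
  have heP : ∀ x, Q x * eu P x = s * (P x * eu Q x) := by
    intro x
    have h1 : HasFDerivAt P ((s * Q x ^ (s - 1)) • fderiv ℝ Q x) x :=
      (dQ x).hasFDerivAt.rpow_const (Or.inl (hQpos x).ne')
    unfold eu
    rw [h1.fderiv]
    have h2 : Q x * Q x ^ (s - 1) = P x := by
      rw [Real.rpow_sub_one (hQpos x).ne']
      have := (hQpos x).ne'
      simp only [hP]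
      field_simp
    rw [← h2]
    simp only [smul_apply, smul_eq_mul]
    ring
  have hew : ∀ x, eu w x = s * (Q x * (P x * eu ρ x + eu P x * ρ x) + eu Q x * (P x * ρ x)) +
      1 / 2 * (‖x‖ ^ 2 * (Q x * eu Q x + eu Q x * Q x) + 2 * ‖x‖ ^ 2 * (Q x * Q x)) := by
    intro x
    rw [hw, eu_add ((dQ.fun_mul (dP.fun_mul dρ)).const_mul s)
      ((dn.fun_mul (dQ.fun_mul dQ)).const_mul (1/2)), eu_cmul _ (dQ.fun_mul (dP.fun_mul dρ)),
      eu_cmul _ (dn.fun_mul (dQ.fun_mul dQ)), eu_mul dQ (dP.fun_mul dρ), eu_mul dP dρ,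
      eu_mul dn (dQ.fun_mul dQ), eu_mul dQ dQ, eu_normsq]
  have hel : ∀ x, eu (lapl ρ) x = eu ρ x - (1 + s) * (P x * eu ρ x + eu P x * ρ x) -
      (‖x‖ ^ 2 * eu Q x + 2 * ‖x‖ ^ 2 * Q x) := by
    intro x
    have : lapl ρ = fun x => ρ x - (1 + s) * (P x * ρ x) - ‖x‖ ^ 2 * Q x := funext hlr
    rw [this, eu_sub (dρ.fun_sub ((dP.fun_mul dρ).const_mul _)) (dn.fun_mul dQ),
      eu_sub dρ ((dP.fun_mul dρ).const_mul _), eu_cmul _ (dP.fun_mul dρ), eu_mul dP dρ,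
      eu_mul dn dQ, eu_normsq]
  have Eew : ∀ x, eu w x = lapl Q x * er x - Q x * lapl er x - 3 * (‖x‖ ^ 2 * Q x ^ 2)
      + 2 * (Q x * ρ x) - 2 * (1 + s) * (Q x * (P x * ρ x)) := by
    intro x
    rw [her, lapl_eu hρs, hel, hlQ, hlr, hew]
    linear_combination (-ρ x) * heP x
  have J1 := Ia.sub Ib
  have J2 := J1.sub (I3.const_mul 3)
  have J3 := J2.add (I1.const_mul 2)
  have J4 := J3.sub (I2.const_mul (2 * (1 + s)))
  have Iew : Integrable (eu w) := J4.congr (ae_of_all _ fun x => (Eew x).symm)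
  have D := div_lemma w (hws.of_le (by simp)) Iw Iew
  have D1 : ∫ x, eu w x = ((∫ x, lapl Q x * er x) - (∫ x, Q x * lapl er x)) -
      3 * (∫ x, ‖x‖ ^ 2 * Q x ^ 2) + 2 * (∫ x, Q x * ρ x) -
      2 * (1 + s) * ∫ x, Q x * (P x * ρ x) := by
    rw [← integral_const_mul, ← integral_const_mul, ← integral_const_mul, ← integral_sub' Ia Ib,
      ← integral_sub' J1 (I3.const_mul 3), ← integral_add' J2 (I1.const_mul 2),
      ← integral_sub' J3 (I2.const_mul _)]
    exact integral_congr_ae (ae_of_all _ Eew)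
  have D2 : ∫ x, w x = s * (∫ x, Q x * (P x * ρ x)) + 1 / 2 * ∫ x, ‖x‖ ^ 2 * Q x ^ 2 := by
    rw [← integral_const_mul, ← integral_const_mul,
      ← integral_add (I2.const_mul s) (I3.const_mul _)]
    refine integral_congr_ae (ae_of_all _ fun x => ?_)
    simp only [hw]; ring
  rw [D1, D2, L1] at D
  rw [L0] at E0
  generalize (∫ x, Q x * (P x * ρ x)) = b at *
  generalize (∫ x, ‖x‖ ^ 2 * Q x ^ 2) = m at *
  generalize (∫ x, Q x * ρ x) = a at *
  have hbm : s * b = - m := by linarith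
  have hb : 4 * b = - (N * m) := by rw [← hsN, mul_assoc, hbm]; ring
  linear_combination (1/2) * D + (1 - N/2) * hbm + (1/4) * hb
end
end

section
/- Let Q be the ground state on ℝ^N and let ρ be the unique radial Schwartz solution of L₊ρ = |x|²Q, where L₊ := −Δ + 1 − (1+4/N)Q^{4/N}. Then: (i) for every multi-index a ∈ ℕ₀^N there is a constant C_a > 0 such that |∂^a Q(x)| ≤ C_a Q(x) for all x ∈ ℝ^N; (ii) for every multi-index a ∈ ℕ₀^N there are constants C_a > 0 and κ_a > 0 such that |∂^a ρ(x)| ≤ C_a (1+|x|)^{κ_a} Q(x) for all x ∈ ℝ^N. -/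
open MeasureTheory Filter Complex

noncomputable section

/-! ### One-dimensional lemmas -/

lemma od_anti {h h' : ℝ → ℝ} {a : ℝ} (hd : ∀ r, a ≤ r → HasDerivAt h (h' r) r)
    (hle : ∀ r, a ≤ r → h' r ≤ 0) : ∀ x y, a ≤ x → x ≤ y → h y ≤ h x := by
  have : AntitoneOn h (Set.Ici a) := by
    apply antitoneOn_of_deriv_nonpos (convex_Ici a)
    · intro x hx; exact (hd x hx).continuousAt.continuousWithinAt
    · intro x hx
      exact (hd x (interior_subset hx)).differentiableAt.differentiableWithinAt
    · intro x hx
      have hx' := interior_subset hx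
      rw [(hd x hx').deriv]; exact hle x hx'
  intro x y hx hxy
  exact this (Set.mem_Ici.2 hx) (Set.mem_Ici.2 (hx.trans hxy)) hxy

/-- sign propagation for `h' ≤ (c - m/r) h`. -/
lemma od_gron {h h' : ℝ → ℝ} {a c m : ℝ} (ha : 0 < a)
    (hd : ∀ r, a ≤ r → HasDerivAt h (h' r) r)
    (hle : ∀ r, a ≤ r → h' r ≤ (c - m / r) * h r) :
    (∀ x y, a ≤ x → x ≤ y → h x ≤ 0 → h y ≤ 0) ∧
    (∀ x y, a ≤ x → x ≤ y → h x < 0 → h y < 0) := by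
  have key := od_anti (h := fun r => h r * Real.exp (-(c * r - m * Real.log r)))
    (h' := fun r => (h' r - (c - m / r) * h r) * Real.exp (-(c * r - m * Real.log r))) (a := a)
    (by
      intro r hr
      have hr0 : r ≠ 0 := (ha.trans_le hr).ne'
      have h2 : HasDerivAt (fun r => -(c * r - m * Real.log r)) (-(c * 1 - m * r⁻¹)) r :=
        (((hasDerivAt_id r).const_mul c).sub ((Real.hasDerivAt_log hr0).const_mul m)).neg
      refine ((hd r hr).mul h2.exp).congr_deriv ?_
      rw [div_eq_mul_inv]
      ring)
    (by
      intro r hr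
      exact mul_nonpos_of_nonpos_of_nonneg (by linarith [hle r hr]) (Real.exp_pos _).le)
  constructor
  · intro x y hx hxy h0
    have := key x y hx hxy
    have h3 : h x * Real.exp (-(c * x - m * Real.log x)) ≤ 0 :=
      mul_nonpos_of_nonpos_of_nonneg h0 (Real.exp_pos _).le
    by_contra hc
    push Not at hc
    have := mul_pos hc (Real.exp_pos (-(c * y - m * Real.log y)))
    try simp only at *
    linarith
  · intro x y hx hxy h0
    have := key x y hx hxy
    have h3 : h x * Real.exp (-(c * x - m * Real.log x)) < 0 :=
      mul_neg_of_neg_of_pos h0 (Real.exp_pos _)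
    by_contra hc
    push Not at hc
    have := mul_nonneg hc (Real.exp_pos (-(c * y - m * Real.log y))).le
    try simp only at *
    linarith

lemma od_maxp {u u1 u2 V : ℝ → ℝ} {a m : ℝ}
    (hd : ∀ r, a ≤ r → HasDerivAt u (u1 r) r) (hd1 : ∀ r, a ≤ r → HasDerivAt u1 (u2 r) r)
    (hV : ∀ r, a ≤ r → 0 < V r)
    (hle : ∀ r, a ≤ r → u2 r + m / r * u1 r ≤ V r * u r)
    (h0 : 0 ≤ u a) (hlim : Tendsto u atTop (nhds 0)) : ∀ r, a ≤ r → 0 ≤ u r := by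
  intro r hr
  by_contra hc
  push Not at hc
  obtain ⟨b, hb⟩ := ((hlim.eventually (lt_mem_nhds (show u r / 2 < 0 by linarith))).and
    (eventually_ge_atTop r)).exists
  obtain ⟨x, hx, hmin⟩ := isCompact_Icc.exists_isMinOn (s := Set.Icc a b) (f := u)
    ⟨r, hr, hb.2⟩ (fun y hy => (hd y hy.1).continuousAt.continuousWithinAt)
  have hxr : u x ≤ u r := hmin (show r ∈ Set.Icc a b from ⟨hr, hb.2⟩)
  have hxa : a ≠ x := by rintro rfl; linarith
  have hxb : x ≠ b := by rintro rfl; linarith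
  have hxa' : a < x := lt_of_le_of_ne hx.1 hxa
  have hloc : IsLocalMin u x :=
    hmin.isLocalMin (Icc_mem_nhds hxa' (lt_of_le_of_ne hx.2 hxb))
  have h1 : u1 x = 0 := hloc.hasDerivAt_eq_zero (hd x hx.1)
  have h2 : u2 x < 0 := by
    have h3 := hle x hx.1
    rw [h1] at h3
    have := mul_neg_of_pos_of_neg (hV x hx.1) (show u x < 0 by linarith)
    linarith
  have hev : deriv u =ᶠ[nhds x] u1 := by
    filter_upwards [lt_mem_nhds hxa'] with y hy using (hd y hy.le).deriv
  have hmax : IsLocalMax u x := by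
    apply isLocalMax_of_deriv_deriv_neg
    · rw [hev.deriv_eq, (hd1 x hx.1).deriv]; exact h2
    · rw [(hd x hx.1).deriv, h1]
    · exact (hd x hx.1).continuousAt
  have hconst : u =ᶠ[nhds x] fun _ => u x := by
    filter_upwards [hloc, hmax] with y h3 h4 using le_antisymm h4 h3
  have h5 : deriv (deriv u) x = 0 := by
    rw [hconst.deriv.deriv_eq]; simp
  rw [hev.deriv_eq, (hd1 x hx.1).deriv] at h5
  linarith

/-- `|q'| ≤ K q`. -/
lemma od_logder {q q1 q2 g : ℝ → ℝ} {m : ℝ} (hm : 0 ≤ m) (hq : ∀ r, 0 < q r) (hg : ∀ r, 0 ≤ g r)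
    (hd : ∀ r, HasDerivAt q (q1 r) r) (hd1 : ∀ r, HasDerivAt q1 (q2 r) r)
    (hode : ∀ r, 0 < r → q2 r + m / r * q1 r = q r - g r * q r) :
    ∃ K, 0 < K ∧ ∀ r, 1 ≤ r → |q1 r| ≤ K * q r := by
  have upper : ∃ K, 0 < K ∧ ∀ r, 1 ≤ r → q1 r ≤ K * q r := by
    set K := 1 + |q1 1| / q 1 with hK
    have hK1 : 1 ≤ K := by have := div_nonneg (abs_nonneg (q1 1)) (hq 1).le; linarith
    refine ⟨K, by linarith, fun r hr => ?_⟩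
    have := (od_gron (h := fun r => q1 r - K * q r) (h' := fun r => q2 r - K * q1 r)
      (a := 1) (c := -K) (m := m) one_pos
      (fun r _ => (hd1 r).sub ((hd r).const_mul K))
      (by
        intro r hr
        have h1 := hode r (by linarith)
        have h2 : 0 ≤ m / r := div_nonneg hm (by linarith)
        have h3 := hq r
        have h4 := mul_nonneg (hg r) h3.le
        have h5 : 0 ≤ m / r * (K * q r) := mul_nonneg h2 (mul_nonneg (by linarith) h3.le)
        have h6 : 0 ≤ (K * K - 1) * q r := mul_nonneg (by nlinarith) h3.le
        nlinarith)).1 1 r le_rfl hr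
      (by
        have h7 : |q1 1| / q 1 * q 1 = |q1 1| := div_mul_cancel₀ _ (hq 1).ne'
        have := le_abs_self (q1 1)
        have := hq 1
        simp only [hK]
        nlinarith)
    try simp only at this
    linarith
  have lower : ∃ K, 0 < K ∧ ∀ r, 1 ≤ r → -(K * q r) ≤ q1 r := by
    refine ⟨m + 1, by linarith, fun a ha => ?_⟩
    set K := m + 1 with hK
    by_contra hc
    push Not at hc
    have hineq : ∀ r, a ≤ r → q2 r + K * q1 r ≤ (K - m / r) * (q1 r + K * q r) := by
      intro r hr
      have hr1 : 1 ≤ r := ha.trans hr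
      have h1 := hode r (by linarith)
      have h2 : 0 ≤ m / r := div_nonneg hm (by linarith)
      have h2' : m / r ≤ m := div_le_self hm hr1
      have h3 := hq r
      have h4 := mul_nonneg (hg r) h3.le
      have h6 : 0 ≤ (K * K - K * (m / r) - 1) * q r := by
        apply mul_nonneg _ h3.le
        have : K * (m / r) ≤ K * m := mul_le_mul_of_nonneg_left h2' (by linarith)
        nlinarith
      nlinarith
    have hneg := (od_gron (h := fun r => q1 r + K * q r) (h' := fun r => q2 r + K * q1 r)
      (a := a) (c := K) (m := m) (by linarith)
      (fun r _ => (hd1 r).add ((hd r).const_mul K)) hineq).2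
    have hneg' : ∀ r, a ≤ r → q1 r + K * q r < 0 := fun r hr =>
      hneg a r le_rfl hr (by linarith)
    have hanti := od_anti (h := fun r => q1 r + K * q r) (h' := fun r => q2 r + K * q1 r) (a := a)
      (fun r _ => (hd1 r).add ((hd r).const_mul K))
      (by
        intro r hr
        refine (hineq r hr).trans ?_
        have hr1 : 1 ≤ r := ha.trans hr
        have h2' : m / r ≤ m := div_le_self hm hr1
        exact mul_nonpos_of_nonneg_of_nonpos (by linarith) (hneg' r hr).le)
    set δ := -(q1 a + K * q a) with hδ
    have hδ0 : 0 < δ := by have := hneg' a le_rfl; linarith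
    have hlin := od_anti (h := fun r => q r + δ * r) (h' := fun r => q1 r + δ * 1) (a := a)
      (fun r _ => (hd r).add ((hasDerivAt_id r).const_mul δ))
      (by
        intro r hr
        have h1 := hanti a r le_rfl hr
        have := mul_pos (show 0 < K by linarith) (hq r)
        try simp only at h1
        linarith)
    have h1 := hlin a (a + q a / δ) le_rfl (by
      have := div_pos (hq a) hδ0; linarith)
    have h2 : δ * (q a / δ) = q a := by field_simp
    have := hq (a + q a / δ)
    try simp only at h1
    nlinarith
  obtain ⟨K1, h1, hK1⟩ := upper
  obtain ⟨K2, h2, hK2⟩ := lower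
  refine ⟨K1 + K2, by linarith, fun r hr => abs_le.2 ⟨?_, ?_⟩⟩
  · have := hK2 r hr
    have := mul_pos h1 (hq r)
    linarith
  · have := hK1 r hr
    have := mul_pos h2 (hq r)
    linarith

/-- `q' ≤ - q / 2` eventually. -/
lemma od_decay {q q1 q2 g : ℝ → ℝ} {m : ℝ} (hm : 0 ≤ m) (hq : ∀ r, 0 < q r)
    (hg0 : Tendsto g atTop (nhds 0)) (hq0 : Tendsto q atTop (nhds 0))
    (hd : ∀ r, HasDerivAt q (q1 r) r) (hd1 : ∀ r, HasDerivAt q1 (q2 r) r)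
    (hode : ∀ r, 0 < r → q2 r + m / r * q1 r = q r - g r * q r) :
    ∃ a, 1 ≤ a ∧ ∀ r, a ≤ r → q1 r ≤ -(1/2) * q r := by
  obtain ⟨a, ha⟩ := eventually_atTop.1 ((hg0.eventually (gt_mem_nhds (show (0:ℝ) < 1/2 by norm_num))).and
    (eventually_ge_atTop (2 * m + 1)))
  have ha1 : 1 ≤ a := by have := (ha a le_rfl).2; linarith
  refine ⟨a, ha1, fun b hb => ?_⟩
  by_contra hc
  push Not at hc
  have hineq : ∀ r, b ≤ r → (1/2 - m / r) * (q1 r + 1/2 * q r) ≤ q2 r + 1/2 * q1 r := by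
    intro r hr
    have hr1 : 1 ≤ r := by linarith
    have h1 := hode r (by linarith)
    have h2 : 0 ≤ m / r := div_nonneg hm (by linarith)
    have h3 := hq r
    have h4 := (ha r (by linarith)).1
    have h5 := mul_nonneg h2 h3.le
    have h6 : 0 ≤ (1/2 - g r) * q r := mul_nonneg (by linarith) h3.le
    nlinarith
  have hder : ∀ r, HasDerivAt (fun r => q1 r + 1/2 * q r) (q2 r + 1/2 * q1 r) r :=
    fun r => (hd1 r).add ((hd r).const_mul (1/2))
  have hpos : ∀ r, b ≤ r → 0 < q1 r + 1/2 * q r := by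
    intro r hr
    have := (od_gron (h := fun r => -(q1 r + 1/2 * q r)) (h' := fun r => -(q2 r + 1/2 * q1 r))
      (a := b) (c := 1/2) (m := m) (by linarith)
      (fun r _ => (hder r).neg) (fun r hr => by have := hineq r hr; linarith)).2 b r le_rfl hr
      (by linarith)
    try simp only at this
    linarith
  have hmono := od_anti (h := fun r => -(q1 r + 1/2 * q r)) (h' := fun r => -(q2 r + 1/2 * q1 r))
      (a := b) (fun r _ => (hder r).neg)
      (by
        intro r hr
        have h1 := hineq r hr
        have h2 : m / r ≤ 1/2 := by
          have := (ha r (by linarith)).2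
          rw [div_le_iff₀ (by linarith)]; linarith
        have := mul_nonneg (show 0 ≤ 1/2 - m / r by linarith) (hpos r hr).le
        linarith)
  set δ := q1 b + 1/2 * q b with hδ
  have hδ0 : 0 < δ := hpos b le_rfl
  obtain ⟨c, hcc⟩ := eventually_atTop.1 ((hq0.eventually (gt_mem_nhds hδ0)).and
    (eventually_ge_atTop b))
  have hlin := od_anti (h := fun r => -q r + δ/2 * r) (h' := fun r => -q1 r + δ/2 * 1) (a := c)
      (fun r _ => (hd r).neg.add ((hasDerivAt_id r).const_mul (δ/2)))
      (by
        intro r hr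
        have h1 := hmono b r le_rfl (hcc r hr).2
        have h2 := (hcc r hr).1
        try simp only at h1
        linarith)
  have h1 := hlin c (c + 2) le_rfl (by linarith)
  have h2 := (hcc (c + 2) (by linarith)).1
  have := hq c
  try simp only at h1
  linarith

/-- comparison for `R`. -/
lemma od_comp {q q1 q2 g R R1 R2 : ℝ → ℝ} {m p : ℝ} (hm : 0 ≤ m)
    (hq : ∀ r, 0 < q r)
    (hg0 : Tendsto g atTop (nhds 0)) (hg1 : Tendsto (fun r => r * g r) atTop (nhds 0))
    (hq0 : Tendsto q atTop (nhds 0)) (hq3 : Tendsto (fun r => r ^ 3 * q r) atTop (nhds 0))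
    (hd : ∀ r, HasDerivAt q (q1 r) r) (hd1 : ∀ r, HasDerivAt q1 (q2 r) r)
    (hode : ∀ r, 0 < r → q2 r + m / r * q1 r = q r - g r * q r)
    (hR0 : Tendsto R atTop (nhds 0))
    (hdR : ∀ r, HasDerivAt R (R1 r) r) (hdR1 : ∀ r, HasDerivAt R1 (R2 r) r)
    (hodeR : ∀ r, 0 < r → R2 r + m / r * R1 r = R r - p * g r * R r - r ^ 2 * q r) :
    ∃ a C, 1 ≤ a ∧ 0 < C ∧ ∀ r, a ≤ r → |R r| ≤ C * (r ^ 3 * q r) ∧ p * g r ≤ 1 ∧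
      q1 r ≤ -(1/2) * q r := by
  obtain ⟨a0, ha0, hdec⟩ := od_decay hm hq hg0 hq0 hd hd1 hode
  have e1 : ∀ᶠ r in atTop, p * g r < 1 := by
    have : Tendsto (fun r => p * g r) atTop (nhds 0) := by simpa using hg0.const_mul p
    exact this.eventually (gt_mem_nhds one_pos)
  have e2 : ∀ᶠ r in atTop, (p - 1) * (r * g r) < 1 := by
    have : Tendsto (fun r => (p - 1) * (r * g r)) atTop (nhds 0) := by
      simpa using hg1.const_mul (p - 1)
    exact this.eventually (gt_mem_nhds one_pos)
  obtain ⟨a, ha⟩ := eventually_atTop.1 ((e1.and e2).and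
    ((eventually_ge_atTop a0).and (eventually_ge_atTop (6 + 3 * m))))
  have haa := ha a le_rfl
  have ha1 : 1 ≤ a := ha0.trans haa.2.1
  have hψ : ∀ r, HasDerivAt (fun r => r ^ 3 * q r) (3 * r ^ 2 * q r + r ^ 3 * q1 r) r := by
    intro r
    have := (hasDerivAt_pow 3 r).mul (hd r)
    exact this.congr_deriv (by norm_num)
  have hψ1 : ∀ r, HasDerivAt (fun r => 3 * r ^ 2 * q r + r ^ 3 * q1 r)
      (6 * r * q r + 6 * r ^ 2 * q1 r + r ^ 3 * q2 r) r := by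
    intro r
    have := (((hasDerivAt_pow 2 r).const_mul 3).mul (hd r)).add ((hasDerivAt_pow 3 r).mul (hd1 r))
    refine this.congr_deriv ?_
    norm_num
    ring
  have hsup : ∀ r, a ≤ r → (6 * r * q r + 6 * r ^ 2 * q1 r + r ^ 3 * q2 r)
      + m / r * (3 * r ^ 2 * q r + r ^ 3 * q1 r)
      ≤ (1 - p * g r) * (r ^ 3 * q r) - r ^ 2 * q r := by
    intro r hr
    have hr0 : 0 < r := by linarith
    have h1 := hode r hr0
    have h2 : q2 r = q r - g r * q r - m / r * q1 r := by linarith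
    have h3 := hdec r (haa.2.1.trans hr)
    have h4 := (ha r hr).1.2
    have h5 := (ha r hr).2.2
    have hq' := hq r
    rw [h2]
    have h6 : m / r * (3 * r ^ 2 * q r) = 3 * m * r * q r := by field_simp
    have h7 : 0 ≤ r ^ 2 * (-(1/2) * q r - q1 r) := mul_nonneg (by positivity) (by linarith)
    have h8 : 0 ≤ r * q r * (r - (6 + 3 * m)) := mul_nonneg (by positivity) (by linarith)
    have h9 : 0 ≤ r ^ 2 * q r * (1 - (p - 1) * (r * g r)) := mul_nonneg (by positivity) (by linarith)
    nlinarith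
  set C := 1 + |R a| / (a ^ 3 * q a) with hC
  have hden : 0 < a ^ 3 * q a := mul_pos (by positivity) (hq a)
  have hC1 : 1 ≤ C := by have := div_nonneg (abs_nonneg (R a)) hden.le; linarith
  have hCa : |R a| ≤ C * (a ^ 3 * q a) := by
    have : |R a| / (a ^ 3 * q a) * (a ^ 3 * q a) = |R a| := div_mul_cancel₀ _ hden.ne'
    rw [hC, add_mul, this]; linarith
  refine ⟨a, C, ha1, by linarith, fun r hr => ⟨?_, (ha r hr).1.1.le,
    hdec r (haa.2.1.trans hr)⟩⟩
  have hV : ∀ r, a ≤ r → 0 < 1 - p * g r := fun r hr => by linarith [(ha r hr).1.1]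
  rw [abs_le]
  constructor
  · have := od_maxp (u := fun r => C * (r ^ 3 * q r) + R r)
      (u1 := fun r => C * (3 * r ^ 2 * q r + r ^ 3 * q1 r) + R1 r)
      (u2 := fun r => C * (6 * r * q r + 6 * r ^ 2 * q1 r + r ^ 3 * q2 r) + R2 r)
      (V := fun r => 1 - p * g r) (a := a) (m := m)
      (fun r _ => ((hψ r).const_mul C).add (hdR r))
      (fun r _ => ((hψ1 r).const_mul C).add (hdR1 r)) hV
      (by
        intro r hr
        have h1 := mul_le_mul_of_nonneg_left (hsup r hr) (show 0 ≤ C by linarith)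
        have h2 := hodeR r (by linarith)
        have h3 : 0 ≤ C * (r ^ 2 * q r) :=
          mul_nonneg (by linarith) (mul_nonneg (sq_nonneg r) (hq r).le)
        have h4 : 0 ≤ (r ^ 2 * q r) := (mul_nonneg (sq_nonneg r) (hq r).le)
        try simp only
        linarith)
      (by have := neg_abs_le (R a); linarith)
      (by simpa using (hq3.const_mul C).add hR0) r hr
    try simp only at this
    linarith
  · have := od_maxp (u := fun r => C * (r ^ 3 * q r) - R r)
      (u1 := fun r => C * (3 * r ^ 2 * q r + r ^ 3 * q1 r) - R1 r)
      (u2 := fun r => C * (6 * r * q r + 6 * r ^ 2 * q1 r + r ^ 3 * q2 r) - R2 r)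
      (V := fun r => 1 - p * g r) (a := a) (m := m)
      (fun r _ => ((hψ r).const_mul C).sub (hdR r))
      (fun r _ => ((hψ1 r).const_mul C).sub (hdR1 r)) hV
      (by
        intro r hr
        have h1 := mul_le_mul_of_nonneg_left (hsup r hr) (show 0 ≤ C by linarith)
        have h2 := hodeR r (by linarith)
        have h3 : 0 ≤ (C - 1) * (r ^ 2 * q r) :=
          mul_nonneg (by linarith) (mul_nonneg (sq_nonneg r) (hq r).le)
        try simp only
        linarith)
      (by have := le_abs_self (R a); linarith)
      (by simpa using (hq3.const_mul C).sub hR0) r hr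
    try simp only at this
    linarith

lemma od_lower {q q1 R1 R2 f : ℝ → ℝ} {n : ℕ} {a C : ℝ} (hC : 0 ≤ C)
    (hq : ∀ r, 0 < q r) (ha : 4 * ((n:ℝ) + 3) ≤ a)
    (hqn : Tendsto (fun r => r ^ (n + 3) * q r) atTop (nhds 0))
    (hd : ∀ r, HasDerivAt q (q1 r) r)
    (hdec : ∀ r, a ≤ r → q1 r ≤ -(1/2) * q r)
    (hR1n : Tendsto (fun r => r ^ n * R1 r) atTop (nhds 0))
    (hdR1 : ∀ r, HasDerivAt R1 (R2 r) r)
    (hodeR : ∀ r, 0 < r → R2 r + n / r * R1 r = f r)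
    (hf : ∀ r, a ≤ r → |f r| ≤ C * (r ^ 3 * q r)) :
    ∀ r, a ≤ r → -(4 * C * (r ^ 3 * q r)) ≤ R1 r := by
  intro r hr
  have ha0 : 0 < a := by have : (0:ℝ) ≤ n := n.cast_nonneg; linarith
  have hder : ∀ r, a ≤ r → HasDerivAt (fun r => r ^ n * R1 r + 4 * C * (r ^ (n + 3) * q r))
      (r ^ n * f r + 4 * C * ((n + 3) * r ^ (n + 2) * q r + r ^ (n + 3) * q1 r)) r := by
    intro r hr
    have hr0 : 0 < r := by linarith
    have h1 := ((hasDerivAt_pow n r).mul (hdR1 r)).add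
      (((hasDerivAt_pow (n + 3) r).mul (hd r)).const_mul (4 * C))
    refine h1.congr_deriv ?_
    rw [← hodeR r hr0]
    have : r ^ n * (n / r) = n * r ^ (n - 1) := by
      rcases n with _ | k
      · simp
      · simp only [Nat.add_sub_cancel]; rw [pow_succ]; field_simp
    have e : n + 3 - 1 = n + 2 := rfl
    rw [e]
    push_cast
    linear_combination (-R1 r) * this
  have hanti := od_anti hder (by
    intro r hr
    have hr0 : 0 < r := by linarith
    have h1 := (abs_le.1 (hf r hr)).2
    have h2 := hdec r hr
    have h3 := hq r
    have hn : (0:ℝ) ≤ n := n.cast_nonneg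
    have e1 : r ^ n * f r ≤ r ^ n * (C * (r ^ 3 * q r)) := by gcongr
    have e2 : r ^ (n + 3) * q1 r ≤ r ^ (n + 3) * (-(1/2) * q r) := by gcongr
    have e3 : (n + 3) * r ^ (n + 2) * q r ≤ 1/4 * r ^ (n+3) * q r := by
      have : r ^ (n + 3) = r * r ^ (n + 2) := by ring
      rw [this]
      have : (n + 3 : ℝ) * (r ^ (n + 2) * q r) ≤ (r / 4) * (r ^ (n + 2) * q r) := by
        gcongr; linarith
      linarith
    have e4 : 4 * C * ((n + 3) * r ^ (n + 2) * q r + r ^ (n + 3) * q1 r) ≤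
        4 * C * (1/4 * r ^ (n+3) * q r + r ^ (n + 3) * (-(1/2) * q r)) := by
      apply mul_le_mul_of_nonneg_left (by linarith) (by linarith)
    have e5 : r ^ n * (C * (r ^ 3 * q r)) = C * (r ^ (n+3) * q r) := by ring
    nlinarith)
  have hlim : Tendsto (fun r => r ^ n * R1 r + 4 * C * (r ^ (n + 3) * q r)) atTop (nhds 0) := by
    simpa using hR1n.add (hqn.const_mul (4 * C))
  have hnn : 0 ≤ r ^ n * R1 r + 4 * C * (r ^ (n + 3) * q r) := by
    apply le_of_tendsto hlim
    filter_upwards [eventually_ge_atTop r] with y hy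
    exact hanti r y hr hy
  have hrn : 0 < r ^ n := by have : 0 < r := by linarith
                             positivity
  have : 0 ≤ r ^ n * (R1 r + 4 * C * (r ^ 3 * q r)) := by
    convert hnn using 1; ring
  have := nonneg_of_mul_nonneg_right this hrn
  linarith

/-- comparison for `R` and `R'`. -/
lemma od_comp2 {q q1 q2 g R R1 R2 : ℝ → ℝ} {n : ℕ} {p : ℝ} (hp : 1 ≤ p)
    (hq : ∀ r, 0 < q r) (hg : ∀ r, 0 ≤ g r)
    (hg0 : Tendsto g atTop (nhds 0)) (hg1 : Tendsto (fun r => r * g r) atTop (nhds 0))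
    (hqn : ∀ k : ℕ, Tendsto (fun r => r ^ k * q r) atTop (nhds 0))
    (hd : ∀ r, HasDerivAt q (q1 r) r) (hd1 : ∀ r, HasDerivAt q1 (q2 r) r)
    (hode : ∀ r, 0 < r → q2 r + n / r * q1 r = q r - g r * q r)
    (hR0 : Tendsto R atTop (nhds 0)) (hR1n : Tendsto (fun r => r ^ n * R1 r) atTop (nhds 0))
    (hdR : ∀ r, HasDerivAt R (R1 r) r) (hdR1 : ∀ r, HasDerivAt R1 (R2 r) r)
    (hodeR : ∀ r, 0 < r → R2 r + n / r * R1 r = R r - p * g r * R r - r ^ 2 * q r) :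
    ∃ a C, 1 ≤ a ∧ 0 < C ∧ ∀ r, a ≤ r → |R r| ≤ C * (r ^ 3 * q r) ∧
      |R1 r| ≤ C * (r ^ 3 * q r) := by
  obtain ⟨a, C, ha, hC, H⟩ := od_comp (Nat.cast_nonneg n) hq hg0 hg1
    (by simpa using hqn 0) (hqn 3) hd hd1 hode hR0 hdR hdR1 hodeR
  set b := max a (4 * ((n:ℝ) + 3)) with hb
  have hab : a ≤ b := le_max_left _ _
  have hf : ∀ r, b ≤ r → |R r - p * g r * R r - r ^ 2 * q r| ≤ (C + 1) * (r ^ 3 * q r) := by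
    intro r hr
    obtain ⟨h1, h2, _⟩ := H r (hab.trans hr)
    have hr1 : 1 ≤ r := by linarith
    have hpg : 0 ≤ p * g r := mul_nonneg (by linarith) (hg r)
    have e1 : |R r - p * g r * R r| ≤ |R r| := by
      have : R r - p * g r * R r = (1 - p * g r) * R r := by ring
      rw [this, abs_mul]
      have : |1 - p * g r| ≤ 1 := abs_le.2 ⟨by linarith, by linarith⟩
      nlinarith [abs_nonneg (R r)]
    have e2 : |r ^ 2 * q r| ≤ r ^ 3 * q r := by
      rw [abs_of_nonneg (mul_nonneg (sq_nonneg r) (hq r).le)]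
      exact mul_le_mul_of_nonneg_right (pow_le_pow_right₀ hr1 (by norm_num)) (hq r).le
    have := abs_sub (R r - p * g r * R r) (r ^ 2 * q r)
    linarith
  have L := od_lower (C := C + 1) (by linarith) hq (le_max_right a _) (hqn _) hd
    (fun r hr => (H r (hab.trans hr)).2.2) hR1n hdR1 hodeR hf
  have U := od_lower (C := C + 1) (R1 := fun r => -R1 r) (R2 := fun r => -R2 r)
    (f := fun r => -(R r - p * g r * R r - r ^ 2 * q r)) (by linarith) hq (le_max_right a _)
    (hqn _) hd
    (fun r hr => (H r (hab.trans hr)).2.2) (by simpa using hR1n.neg) (fun r => (hdR1 r).neg)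
    (by intro r hr; rw [← hodeR r hr]; ring) (by intro r hr; rw [abs_neg]; exact hf r hr)
  refine ⟨b, 4 * (C + 1), ha.trans hab, by linarith, fun r hr => ⟨?_, ?_⟩⟩
  · have h1 := (H r (hab.trans hr)).1
    have : 0 < r ^ 3 * q r := by
      have := hq r
      have : 0 < r := by linarith
      positivity
    nlinarith
  · have h1 := L r hr
    have h2 := U r hr
    try simp only at h2
    exact abs_le.2 ⟨h1, by linarith⟩

/-! ### Radial functions on Euclidean space -/

lemma ra_inner {N : ℕ} (x : EuclideanSpace ℝ (Fin N)) (i : Fin N) :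
    inner ℝ x (EuclideanSpace.single i (1:ℝ)) = x i := by
  simp [EuclideanSpace.inner_single_right]

lemma ra_norm {N : ℕ} {x : EuclideanSpace ℝ (Fin N)} (hx : x ≠ 0) :
    HasFDerivAt (fun y : EuclideanSpace ℝ (Fin N) => ‖y‖) (‖x‖⁻¹ • innerSL ℝ x) x := by
  have h0 : ‖x‖ ≠ 0 := norm_ne_zero_iff.2 hx
  have h := (hasStrictFDerivAt_norm_sq x).hasFDerivAt.sqrt (pow_ne_zero 2 h0)
  have e : (fun y : EuclideanSpace ℝ (Fin N) => √(‖y‖ ^ 2)) = fun y => ‖y‖ := by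
    ext y; exact Real.sqrt_sq (norm_nonneg y)
  rw [e] at h
  refine h.congr_fderiv ?_
  rw [Real.sqrt_sq (norm_nonneg x)]
  ext v
  simp
  field_simp

lemma ra_comp {N : ℕ} {x : EuclideanSpace ℝ (Fin N)} (hx : x ≠ 0) {F : ℝ → ℝ} {F' : ℝ}
    (hF : HasDerivAt F F' ‖x‖) :
    HasFDerivAt (fun y : EuclideanSpace ℝ (Fin N) => F ‖y‖) (F' • ‖x‖⁻¹ • innerSL ℝ x) x :=
  hF.comp_hasFDerivAt x (ra_norm hx)

lemma ra_comp_apply {N : ℕ} {x : EuclideanSpace ℝ (Fin N)} (hx : x ≠ 0) {F : ℝ → ℝ} {F' : ℝ}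
    (hF : HasDerivAt F F' ‖x‖) (i : Fin N) :
    fderiv ℝ (fun y : EuclideanSpace ℝ (Fin N) => F ‖y‖) x (EuclideanSpace.single i (1:ℝ))
      = F' * (x i * ‖x‖⁻¹) := by
  rw [(ra_comp hx hF).fderiv]
  simp only [smul_apply, innerSL_apply_apply, ra_inner, smul_eq_mul]
  ring

lemma ra_theta {N : ℕ} {x : EuclideanSpace ℝ (Fin N)} (hx : x ≠ 0) (i j : Fin N) :
    DifferentiableAt ℝ (fun y : EuclideanSpace ℝ (Fin N) => y i * ‖y‖⁻¹) x ∧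
    fderiv ℝ (fun y : EuclideanSpace ℝ (Fin N) => y i * ‖y‖⁻¹) x (EuclideanSpace.single j (1:ℝ))
      = ((if i = j then 1 else 0) - (x i * ‖x‖⁻¹) * (x j * ‖x‖⁻¹)) * ‖x‖⁻¹ := by
  have h0 : ‖x‖ ≠ 0 := norm_ne_zero_iff.2 hx
  have h1 := ra_comp hx (hasDerivAt_inv h0)
  have h2 : HasFDerivAt (fun y : EuclideanSpace ℝ (Fin N) => y i)
    (EuclideanSpace.proj i : EuclideanSpace ℝ (Fin N) →L[ℝ] ℝ) x :=
    (EuclideanSpace.proj i : EuclideanSpace ℝ (Fin N) →L[ℝ] ℝ).hasFDerivAt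
  have h3 := h2.mul h1
  refine ⟨h3.differentiableAt, ?_⟩
  have h4 : fderiv ℝ (fun y : EuclideanSpace ℝ (Fin N) => y i * ‖y‖⁻¹) x = _ := h3.fderiv
  rw [h4]
  have h5 : (EuclideanSpace.proj i : EuclideanSpace ℝ (Fin N) →L[ℝ] ℝ)
      (EuclideanSpace.single j (1:ℝ)) = if i = j then 1 else 0 := by
    simp [Pi.single_apply]
  simp only [add_apply, smul_apply, innerSL_apply_apply,
    ra_inner, smul_eq_mul, h5]
  split_ifs <;> field_simp <;> ring

lemma ra_sum {N : ℕ} {x : EuclideanSpace ℝ (Fin N)} (hx : x ≠ 0) :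
    ∑ i, (x i * ‖x‖⁻¹) * (x i * ‖x‖⁻¹) = 1 := by
  have h0 : ‖x‖ ≠ 0 := norm_ne_zero_iff.2 hx
  have h := EuclideanSpace.real_norm_sq_eq x
  have : ∑ i, (x i * ‖x‖⁻¹) * (x i * ‖x‖⁻¹) = (∑ i, x i ^ 2) * (‖x‖⁻¹) ^ 2 := by
    rw [Finset.sum_mul]; apply Finset.sum_congr rfl; intros; ring
  rw [this, ← h]; field_simp

lemma ra_theta_le {N : ℕ} (x : EuclideanSpace ℝ (Fin N)) (i : Fin N) :
    |x i * ‖x‖⁻¹| ≤ 1 := by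
  rw [abs_mul, abs_inv, abs_norm]
  have := PiLp.norm_apply_le x i
  rw [Real.norm_eq_abs] at this
  rw [← div_eq_mul_inv]
  exact div_le_one_of_le₀ this (norm_nonneg x)

lemma ra_lapl {N : ℕ} {f : EuclideanSpace ℝ (Fin N) → ℝ} {φ φ1 φ2 : ℝ → ℝ}
    (hf : ∀ x, f x = φ ‖x‖) (h1 : ∀ r, HasDerivAt φ (φ1 r) r) (h2 : ∀ r, HasDerivAt φ1 (φ2 r) r)
    {x : EuclideanSpace ℝ (Fin N)} (hx : x ≠ 0) :
    lapl f x = φ2 ‖x‖ + ((N:ℝ) - 1) / ‖x‖ * φ1 ‖x‖ := by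
  have h0 : ‖x‖ ≠ 0 := norm_ne_zero_iff.2 hx
  have hf' : f = fun x => φ ‖x‖ := funext hf
  have key : ∀ i : Fin N,
      fderiv ℝ (fun y => fderiv ℝ f y (EuclideanSpace.single i (1:ℝ))) x
        (EuclideanSpace.single i (1:ℝ)) =
      φ2 ‖x‖ * ((x i * ‖x‖⁻¹) * (x i * ‖x‖⁻¹)) +
        φ1 ‖x‖ * ((1 - (x i * ‖x‖⁻¹) * (x i * ‖x‖⁻¹)) * ‖x‖⁻¹) := by
    intro i
    have hev : (fun y => fderiv ℝ f y (EuclideanSpace.single i (1:ℝ))) =ᶠ[nhds x]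
        fun y => φ1 ‖y‖ * (y i * ‖y‖⁻¹) := by
      filter_upwards [isOpen_ne.mem_nhds hx] with y hy
      rw [hf']
      exact ra_comp_apply hy (h1 _) i
    rw [hev.fderiv_eq]
    have hd1 := (ra_comp hx (h2 ‖x‖)).differentiableAt
    have hd2 := (ra_theta hx i i).1
    rw [fderiv_fun_mul hd1 hd2]
    simp only [add_apply, smul_apply, smul_eq_mul]
    rw [(ra_theta hx i i).2, ra_comp_apply hx (h2 _) i]
    simp only [if_true]
    ring
  unfold lapl
  rw [Finset.sum_congr rfl (fun i _ => key i), Finset.sum_add_distrib, ← Finset.mul_sum,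
    ← Finset.mul_sum, ← Finset.sum_mul, Finset.sum_sub_distrib, ra_sum hx]
  simp
  field_simp

lemma ra_reduce {n : ℕ} {f : EuclideanSpace ℝ (Fin (n+1)) → ℝ} (hf : ContDiff ℝ (⊤ : ℕ∞) f)
    (hrad : ∀ x y, ‖x‖ = ‖y‖ → f x = f y) :
    ∃ (φ φ1 φ2 : ℝ → ℝ) (e : EuclideanSpace ℝ (Fin (n+1))), ‖e‖ = 1 ∧ (∀ r, φ r = f (r • e)) ∧
      (∀ x, f x = φ ‖x‖) ∧
      (∀ r, HasDerivAt φ (φ1 r) r) ∧ (∀ r, HasDerivAt φ1 (φ2 r) r) ∧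
      (∀ r, |φ1 r| ≤ ‖fderiv ℝ f (r • e)‖) ∧
      (∀ r, 0 < r → lapl f (r • e) = φ2 r + (n:ℝ) / r * φ1 r) := by
  set e : EuclideanSpace ℝ (Fin (n+1)) := EuclideanSpace.single 0 1 with he
  have hne : ‖e‖ = 1 := by simp [he]
  set φ : ℝ → ℝ := fun r => f (r • e) with hφ
  have hφs : ContDiff ℝ (⊤ : ℕ∞) φ := hf.comp (contDiff_id.smul contDiff_const)
  have hφ1s : ContDiff ℝ (⊤ : ℕ∞) (deriv φ) := by
    have := (contDiff_infty_iff_deriv (𝕜 := ℝ) (f := φ)).1 hφs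
    exact this.2
  have hrep : ∀ x, f x = φ ‖x‖ := by
    intro x
    apply hrad
    rw [norm_smul, hne]; simp
  have hd1 : ∀ r, HasDerivAt φ (deriv φ r) r := fun r =>
    (hφs.differentiable (by simp) r).hasDerivAt
  have hd2 : ∀ r, HasDerivAt (deriv φ) (deriv (deriv φ) r) r := fun r =>
    (hφ1s.differentiable (by simp) r).hasDerivAt
  refine ⟨φ, deriv φ, deriv (deriv φ), e, hne, fun r => rfl, hrep, hd1, hd2, ?_, ?_⟩
  · intro r
    have h1 : HasDerivAt (fun r : ℝ => r • e) ((1:ℝ) • e) r := (hasDerivAt_id r).smul_const e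
    have h2 := ((hf.differentiable (by simp) (r • e)).hasFDerivAt).comp_hasDerivAt r h1
    have h3 : deriv φ r = _ := h2.deriv
    rw [h3, one_smul, ← Real.norm_eq_abs]
    have := (fderiv ℝ f (r • e)).le_opNorm e
    rwa [hne, mul_one] at this
  · intro r hr
    have hx : r • e ≠ 0 := by
      rw [← norm_ne_zero_iff, norm_smul, hne]; simp [hr.ne']
    have hnr : ‖r • e‖ = r := by rw [norm_smul, hne]; simp [hr.le]
    rw [ra_lapl hrep hd1 hd2 hx, hnr]
    push_cast
    ring

/-! ### Algebra of coefficient functions -/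

lemma al_deriv {N : ℕ} (G : Set (EuclideanSpace ℝ (Fin N) → ℝ))
    (hG : ∀ g ∈ G, ∀ i : Fin N, ∃ d ∈ Algebra.adjoin ℝ G, ∀ x, x ≠ 0 →
      DifferentiableAt ℝ g x ∧ fderiv ℝ g x (EuclideanSpace.single i (1:ℝ)) = d x) :
    ∀ g ∈ Algebra.adjoin ℝ G, ∀ i : Fin N, ∃ d ∈ Algebra.adjoin ℝ G, ∀ x, x ≠ 0 →
      DifferentiableAt ℝ g x ∧ fderiv ℝ g x (EuclideanSpace.single i (1:ℝ)) = d x := by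
  intro g hg
  induction hg using Algebra.adjoin_induction with
  | mem g hg => exact hG g hg
  | algebraMap r =>
    intro i
    refine ⟨0, zero_mem _, fun x _ => ?_⟩
    have : (algebraMap ℝ (EuclideanSpace ℝ (Fin N) → ℝ)) r = fun _ => r := rfl
    rw [this]
    simp
  | add f g hf hg hf' hg' =>
    intro i
    obtain ⟨d, hd, hd'⟩ := hf' i
    obtain ⟨d2, hd2, hd2'⟩ := hg' i
    refine ⟨d + d2, add_mem hd hd2, fun x hx => ?_⟩
    obtain ⟨a1, a2⟩ := hd' x hx
    obtain ⟨b1, b2⟩ := hd2' x hx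
    refine ⟨a1.add b1, ?_⟩
    rw [fderiv_add a1 b1]
    simp [a2, b2]
  | mul f g hf hg hf' hg' =>
    intro i
    obtain ⟨d, hd, hd'⟩ := hf' i
    obtain ⟨d2, hd2, hd2'⟩ := hg' i
    refine ⟨f * d2 + g * d, add_mem (mul_mem hf hd2) (mul_mem hg hd), fun x hx => ?_⟩
    obtain ⟨a1, a2⟩ := hd' x hx
    obtain ⟨b1, b2⟩ := hd2' x hx
    refine ⟨a1.mul b1, ?_⟩
    rw [fderiv_mul a1 b1]
    simp [a2, b2]

lemma al_iter {N : ℕ} (A : Subalgebra ℝ (EuclideanSpace ℝ (Fin N) → ℝ))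
    (hA : ∀ g ∈ A, ∀ i : Fin N, ∃ d ∈ A, ∀ x, x ≠ 0 →
      DifferentiableAt ℝ g x ∧ fderiv ℝ g x (EuclideanSpace.single i (1:ℝ)) = d x)
    {Q f : EuclideanSpace ℝ (Fin N) → ℝ} (hQ : Differentiable ℝ Q)
    (hQd : ∀ i : Fin N, ∃ d ∈ A, ∀ x, x ≠ 0 →
      fderiv ℝ Q x (EuclideanSpace.single i (1:ℝ)) = d x * Q x)
    (hf : ContDiff ℝ (⊤ : ℕ∞) f) {P : EuclideanSpace ℝ (Fin N) → ℝ} (hP : P ∈ A)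
    (hfP : ∀ x, x ≠ 0 → f x = P x * Q x) :
    ∀ (n : ℕ) (v : Fin n → Fin N), ∃ P ∈ A, ∀ x, x ≠ 0 →
      iteratedFDeriv ℝ n f x (fun k => EuclideanSpace.single (v k) (1:ℝ)) = P x * Q x := by
  intro n
  induction n with
  | zero => intro v; exact ⟨P, hP, fun x hx => by simpa using hfP x hx⟩
  | succ n ih =>
    intro v
    obtain ⟨P', hP', h⟩ := ih (Fin.tail v)
    obtain ⟨d, hd, hd'⟩ := hA P' hP' (v 0)
    obtain ⟨D, hD, hD'⟩ := hQd (v 0)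
    refine ⟨d + P' * D, add_mem hd (mul_mem hP' hD), fun x hx => ?_⟩
    have hdiff : DifferentiableAt ℝ (iteratedFDeriv ℝ n f) x :=
      hf.differentiable_iteratedFDeriv (by exact_mod_cast ENat.natCast_lt_top n) x
    rw [iteratedFDeriv_succ_apply_left]
    have e1 := fderiv_continuousMultilinear_apply_const hdiff
      (fun k => EuclideanSpace.single (Fin.tail v k) (1:ℝ))
    have e2 : (fun y => iteratedFDeriv ℝ n f y
        (fun k => EuclideanSpace.single (Fin.tail v k) (1:ℝ))) =ᶠ[nhds x] fun y => P' y * Q y := by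
      filter_upwards [isOpen_ne.mem_nhds hx] with y hy using h y hy
    rw [e2.fderiv_eq, fderiv_fun_mul (hd' x hx).1 (hQ x)] at e1
    have e3 := congrArg (fun L => L (EuclideanSpace.single (v 0) (1:ℝ))) e1
    simp only [add_apply, smul_apply, smul_eq_mul,
      hD' x hx, (hd' x hx).2] at e3
    have e4 : (fderiv ℝ (iteratedFDeriv ℝ n f) x (EuclideanSpace.single (v 0) (1:ℝ)))
        (Fin.tail fun k => EuclideanSpace.single (v k) (1:ℝ)) =
        P' x * (D x * Q x) + Q x * d x := by rw [e3]; rfl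
    rw [e4]
    simp only [Pi.add_apply, Pi.mul_apply]
    ring

lemma al_bdd {N : ℕ} (G : Set (EuclideanSpace ℝ (Fin N) → ℝ)) (a : ℝ)
    (hG : ∀ g ∈ G, ∃ C, ∀ x, a ≤ ‖x‖ → |g x| ≤ C) :
    ∀ g ∈ Algebra.adjoin ℝ G, ∃ C, ∀ x, a ≤ ‖x‖ → |g x| ≤ C := by
  intro g hg
  induction hg using Algebra.adjoin_induction with
  | mem g hg => exact hG g hg
  | algebraMap r => exact ⟨|r|, fun x _ => le_rfl⟩
  | add f g hf hg hf' hg' =>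
    obtain ⟨C, hC⟩ := hf'
    obtain ⟨D, hD⟩ := hg'
    exact ⟨C + D, fun x hx => (abs_add_le _ _).trans (add_le_add (hC x hx) (hD x hx))⟩
  | mul f g hf hg hf' hg' =>
    obtain ⟨C, hC⟩ := hf'
    obtain ⟨D, hD⟩ := hg'
    refine ⟨C * D, fun x hx => ?_⟩
    rw [Pi.mul_apply, abs_mul]
    exact mul_le_mul (hC x hx) (hD x hx) (abs_nonneg _) ((abs_nonneg _).trans (hC x hx))

lemma al_poly {N : ℕ} (G : Set (EuclideanSpace ℝ (Fin N) → ℝ)) (a : ℝ)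
    (hG : ∀ g ∈ G, ∃ (C : ℝ) (k : ℕ), 0 ≤ C ∧ ∀ x, a ≤ ‖x‖ → |g x| ≤ C * (1 + ‖x‖) ^ k) :
    ∀ g ∈ Algebra.adjoin ℝ G,
      ∃ (C : ℝ) (k : ℕ), 0 ≤ C ∧ ∀ x, a ≤ ‖x‖ → |g x| ≤ C * (1 + ‖x‖) ^ k := by
  intro g hg
  induction hg using Algebra.adjoin_induction with
  | mem g hg => exact hG g hg
  | algebraMap r => exact ⟨|r|, 0, abs_nonneg _, fun x _ => by simp⟩
  | add f g hf hg hf' hg' =>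
    obtain ⟨C, k, hC0, hC⟩ := hf'
    obtain ⟨D, l, hD0, hD⟩ := hg'
    refine ⟨C + D, k + l, by positivity, fun x hx => (abs_add_le _ _).trans ?_⟩
    have h1 : (1:ℝ) ≤ 1 + ‖x‖ := by linarith [norm_nonneg x]
    have h2 : C * (1 + ‖x‖) ^ k ≤ C * (1 + ‖x‖) ^ (k + l) := by gcongr <;> first | exact h1 | omega
    have h3 : D * (1 + ‖x‖) ^ l ≤ D * (1 + ‖x‖) ^ (k + l) := by gcongr <;> first | exact h1 | omega
    linarith [hC x hx, hD x hx]
  | mul f g hf hg hf' hg' =>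
    obtain ⟨C, k, hC0, hC⟩ := hf'
    obtain ⟨D, l, hD0, hD⟩ := hg'
    refine ⟨C * D, k + l, by positivity, fun x hx => ?_⟩
    rw [Pi.mul_apply, abs_mul]
    calc |f x| * |g x| ≤ (C * (1 + ‖x‖) ^ k) * (D * (1 + ‖x‖) ^ l) :=
          mul_le_mul (hC x hx) (hD x hx) (abs_nonneg _) ((abs_nonneg _).trans (hC x hx))
      _ = _ := by ring

lemma al_rad {N : ℕ} (A : Subalgebra ℝ (EuclideanSpace ℝ (Fin N) → ℝ))
    (hθ : ∀ i, (fun x : EuclideanSpace ℝ (Fin N) => x i * ‖x‖⁻¹) ∈ A) {F F1 : ℝ → ℝ}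
    (hF : ∀ r, 0 < r → HasDerivAt F (F1 r) r) {D : EuclideanSpace ℝ (Fin N) → ℝ} (hD : D ∈ A)
    (hFD : ∀ x, x ≠ 0 → F1 ‖x‖ = D x) :
    ∀ i : Fin N, ∃ d ∈ A, ∀ x, x ≠ 0 →
      DifferentiableAt ℝ (fun y : EuclideanSpace ℝ (Fin N) => F ‖y‖) x ∧
      fderiv ℝ (fun y : EuclideanSpace ℝ (Fin N) => F ‖y‖) x (EuclideanSpace.single i (1:ℝ))
        = d x := by
  intro i
  refine ⟨_, mul_mem hD (hθ i), fun x hx => ?_⟩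
  have h := hF ‖x‖ (norm_pos_iff.2 hx)
  refine ⟨(ra_comp hx h).differentiableAt, ?_⟩
  rw [ra_comp_apply hx h, hFD x hx]; rfl

lemma al_theta {N : ℕ} (A : Subalgebra ℝ (EuclideanSpace ℝ (Fin N) → ℝ))
    (hθ : ∀ i, (fun x : EuclideanSpace ℝ (Fin N) => x i * ‖x‖⁻¹) ∈ A)
    (hs : (fun x : EuclideanSpace ℝ (Fin N) => ‖x‖⁻¹) ∈ A) (j : Fin N) :
    ∀ i : Fin N, ∃ d ∈ A, ∀ x, x ≠ 0 →
      DifferentiableAt ℝ (fun y : EuclideanSpace ℝ (Fin N) => y j * ‖y‖⁻¹) x ∧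
      fderiv ℝ (fun y : EuclideanSpace ℝ (Fin N) => y j * ‖y‖⁻¹) x
        (EuclideanSpace.single i (1:ℝ)) = d x := by
  intro i
  refine ⟨_, mul_mem (sub_mem (A.algebraMap_mem (if j = i then 1 else 0))
    (mul_mem (hθ j) (hθ i))) hs, fun x hx => ?_⟩
  refine ⟨(ra_theta hx j i).1, ?_⟩
  rw [(ra_theta hx j i).2]; rfl

lemma cp_ext {N : ℕ} {h Q W : EuclideanSpace ℝ (Fin N) → ℝ} (hh : Continuous h)
    (hQ : Continuous Q) (hQ0 : ∀ x, 0 < Q x) (hW : ∀ x, 1 ≤ W x) {a C : ℝ}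
    (hb : ∀ x, a ≤ ‖x‖ → |h x| ≤ C * W x * Q x) :
    ∃ C', 0 < C' ∧ ∀ x, |h x| ≤ C' * W x * Q x := by
  have hc : Continuous (fun x => |h x| / Q x) := hh.abs.div hQ (fun x => (hQ0 x).ne')
  obtain ⟨M, hM⟩ := (isCompact_closedBall (0 : EuclideanSpace ℝ (Fin N)) a).bddAbove_image
    hc.continuousOn
  refine ⟨|C| + |M| + 1, by positivity, fun x => ?_⟩
  have hWQ : 0 < W x * Q x := mul_pos (by linarith [hW x]) (hQ0 x)
  rcases le_total a ‖x‖ with hx | hx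
  · have h1 := hb x hx
    have h2 : C * (W x * Q x) ≤ (|C| + |M| + 1) * (W x * Q x) := by
      gcongr; linarith [le_abs_self C, abs_nonneg M]
    linarith
  · have h1 : |h x| / Q x ≤ M := hM ⟨x, by simpa using hx, rfl⟩
    rw [div_le_iff₀ (hQ0 x)] at h1
    have h2 : M * Q x ≤ |M| * (W x * Q x) := by
      have : Q x ≤ W x * Q x := le_mul_of_one_le_left (hQ0 x).le (hW x)
      have := mul_le_mul_of_nonneg_left this (abs_nonneg M)
      have := mul_le_mul_of_nonneg_right (le_abs_self M) (hQ0 x).le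
      linarith
    have := mul_nonneg (show 0 ≤ |C| + 1 by positivity) hWQ.le
    linarith

lemma ex_lim {h : ℝ → ℝ} {C c : ℝ} (hc : 0 < c) (h0 : ∀ r, 0 ≤ h r)
    (hb : ∀ r, 0 ≤ r → h r ≤ C * Real.exp (-c * r)) (k : ℕ) :
    Tendsto (fun r => r ^ k * h r) atTop (nhds 0) := by
  have h1 := (tendsto_rpow_mul_exp_neg_mul_atTop_nhds_zero (k:ℝ) c hc).const_mul C
  rw [mul_zero] at h1
  refine squeeze_zero' ?_ ?_ h1
  · filter_upwards [eventually_ge_atTop 0] with r hr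
    exact mul_nonneg (pow_nonneg hr k) (h0 r)
  · filter_upwards [eventually_ge_atTop 0] with r hr
    rw [Real.rpow_natCast]
    have := mul_le_mul_of_nonneg_left (hb r hr) (pow_nonneg hr k)
    linarith

lemma sc_lim {h : ℝ → ℝ} {C : ℝ} (hb : ∀ r, 0 < r → |r * h r| ≤ C) :
    Tendsto h atTop (nhds 0) := by
  have h1 := (tendsto_inv_atTop_zero (𝕜 := ℝ)).const_mul C
  rw [mul_zero] at h1
  refine squeeze_zero_norm' ?_ h1
  filter_upwards [eventually_gt_atTop 0] with r hr
  have := hb r hr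
  rw [abs_mul, abs_of_pos hr] at this
  rw [Real.norm_eq_abs, ← div_eq_mul_inv, le_div_iff₀ hr]
  linarith

/-- derivative bounds `|∂^a Q| ≤ C_a Q` and
`|∂^a ρ| ≤ C_a (1+|x|)^{κ_a} Q`, where `ρ` is the radial Schwartz solution of `L₊ρ = |x|²Q`.
Multi-index derivatives are expressed as iterated derivatives in coordinate directions. -/
theorem derivative_bounds (N : ℕ) (hN : 1 ≤ N) (Q : EuclideanSpace ℝ (Fin N) → ℝ)
    (hQ : IsGroundState N Q) (ρ : SchwartzMap (EuclideanSpace ℝ (Fin N)) ℝ)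
    (hρrad : ∀ x y, ‖x‖ = ‖y‖ → ρ x = ρ y)
    (hρ : ∀ x, -lapl (⇑ρ) x + ρ x - (1 + 4 / N) * Q x ^ ((4:ℝ) / N) * ρ x = ‖x‖ ^ 2 * Q x) :
    (∀ (n : ℕ) (v : Fin n → Fin N), ∃ C : ℝ, 0 < C ∧ ∀ x,
        |iteratedFDeriv ℝ n Q x (fun k => EuclideanSpace.single (v k) (1:ℝ))| ≤ C * Q x) ∧
    (∀ (n : ℕ) (v : Fin n → Fin N), ∃ C κ : ℝ, 0 < C ∧ 0 < κ ∧ ∀ x,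
        |iteratedFDeriv ℝ n (⇑ρ) x (fun k => EuclideanSpace.single (v k) (1:ℝ))|
          ≤ C * (1 + ‖x‖) ^ κ * Q x) := by
  obtain ⟨n, rfl⟩ : ∃ n, N = n + 1 := ⟨N - 1, by omega⟩
  obtain ⟨hQs, hQ0, hQrad, hQeq, C0, c0, hC0, hc0, hQexp⟩ := hQ
  have hρs : ContDiff ℝ (⊤ : ℕ∞) (⇑ρ) := ρ.smooth ⊤
  obtain ⟨q, q1, q2, e, he, hqdef, hQq, hd, hd1, hq1b, hQl⟩ := ra_reduce hQs hQrad
  obtain ⟨R, R1, R2, e', he', hRdef, hρR, hdR, hdR1, hR1b, hρl⟩ := ra_reduce hρs hρrad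
  set α : ℝ := 4 / ((n + 1 : ℕ) : ℝ) with hα
  have hα0 : 0 < α := by positivity
  have hq : ∀ r, 0 < q r := fun r => by rw [hqdef]; exact hQ0 _
  set g : ℝ → ℝ := fun r => q r ^ α with hgdef
  have hg : ∀ r, 0 ≤ g r := fun r => Real.rpow_nonneg (hq r).le _
  have hne : ∀ r, 0 ≤ r → ‖r • e‖ = r := fun r hr => by rw [norm_smul, he]; simp [hr]
  have hne' : ∀ r, 0 ≤ r → ‖r • e'‖ = r := fun r hr => by rw [norm_smul, he']; simp [hr]
  have hode : ∀ r, 0 < r → q2 r + n / r * q1 r = q r - g r * q r := by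
    intro r hr
    have h := hQeq (r • e)
    rw [hQl r hr, ← hqdef, Real.rpow_add (hq r), Real.rpow_one] at h
    simp only [hgdef]
    linarith
  have hodeR : ∀ r, 0 < r → R2 r + n / r * R1 r = R r - (1 + α) * g r * R r - r ^ 2 * q r := by
    intro r hr
    have h := hρ (r • e')
    rw [hρl r hr, ← hRdef, hQq, hne' r hr.le] at h
    simp only [hgdef]
    linarith
  have hqe : ∀ r, 0 ≤ r → q r ≤ C0 * Real.exp (-c0 * r) := by
    intro r hr
    have := hQexp (r • e)
    rwa [hne r hr, ← hqdef] at this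
  have hqn : ∀ k : ℕ, Tendsto (fun r => r ^ k * q r) atTop (nhds 0) :=
    ex_lim hc0 (fun r => (hq r).le) hqe
  have hge : ∀ r, 0 ≤ r → g r ≤ C0 ^ α * Real.exp (-(c0 * α) * r) := by
    intro r hr
    have h1 := Real.rpow_le_rpow (hq r).le (hqe r hr) hα0.le
    rw [Real.mul_rpow hC0.le (Real.exp_pos _).le, ← Real.exp_mul] at h1
    have : -(c0 * α) * r = -c0 * r * α := by ring
    rw [this]; exact h1
  have hgn : ∀ k : ℕ, Tendsto (fun r => r ^ k * g r) atTop (nhds 0) :=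
    ex_lim (mul_pos hc0 hα0) hg hge
  have hR0 : Tendsto R atTop (nhds 0) := by
    obtain ⟨C, _, hC⟩ := ρ.decay 1 0
    apply sc_lim (C := C)
    intro r hr
    have := hC (r • e')
    rw [hne' r hr.le, norm_iteratedFDeriv_zero, ← hRdef, Real.norm_eq_abs, pow_one] at this
    rwa [abs_mul, abs_of_pos hr]
  have hR1n : Tendsto (fun r => r ^ n * R1 r) atTop (nhds 0) := by
    obtain ⟨C, _, hC⟩ := ρ.decay (n + 1) 1
    apply sc_lim (C := C)
    intro r hr
    have h1 := hC (r • e')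
    rw [hne' r hr.le, norm_iteratedFDeriv_one] at h1
    have h2 : |r * (r ^ n * R1 r)| = r ^ (n + 1) * |R1 r| := by
      rw [abs_mul, abs_mul, abs_of_pos hr, abs_of_pos (pow_pos hr n)]; ring
    rw [h2]
    exact (mul_le_mul_of_nonneg_left (hR1b r) (by positivity)).trans h1
  obtain ⟨K, hK0, hK⟩ := od_logder (Nat.cast_nonneg n) hq hg hd hd1 hode
  obtain ⟨a, CR, ha1, hCR, hR⟩ := od_comp2 (p := 1 + α) (by linarith) hq hg
    (by simpa using hgn 0) (by simpa using hgn 1) hqn hd hd1 hode hR0 hR1n hdR hdR1 hodeR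
  -- coefficient functions
  have hgb : ∀ r, 0 ≤ r → |g r| ≤ C0 ^ α := by
    intro r hr
    rw [abs_of_nonneg (hg r)]
    refine (hge r hr).trans (mul_le_of_le_one_right (Real.rpow_nonneg hC0.le _) ?_)
    rw [Real.exp_le_one_iff]
    have := mul_nonneg (mul_pos hc0 hα0).le hr
    linarith
  have hdg : ∀ r, HasDerivAt g (α * (g r * (q1 r / q r))) r := by
    intro r
    refine ((hd r).rpow_const (p := α) (Or.inl (hq r).ne')).congr_deriv ?_
    have : q r ^ (α - 1) = g r / q r := by
      rw [Real.rpow_sub (hq r), Real.rpow_one]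
    rw [this]; ring
  have hdW : ∀ r, 0 < r → HasDerivAt (fun r => q1 r / q r)
      (1 - g r - (q1 r / q r) * (q1 r / q r) - n * (r⁻¹ * (q1 r / q r))) r := by
    intro r hr
    refine ((hd1 r).div (hd r) (hq r).ne').congr_deriv ?_
    have h1 : q2 r = q r - g r * q r - n / r * q1 r := by linarith [hode r hr]
    have h2 := (hq r).ne'
    rw [h1]
    field_simp
    try ring
  have hdτ : ∀ r, HasDerivAt (fun r => R r / q r)
      (R1 r / q r - (R r / q r) * (q1 r / q r)) r := by
    intro r
    refine ((hdR r).div (hd r) (hq r).ne').congr_deriv ?_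
    have h2 := (hq r).ne'
    field_simp
  have hdσ : ∀ r, 0 < r → HasDerivAt (fun r => R1 r / q r)
      (R r / q r - (1 + α) * (g r * (R r / q r)) - r * r - n * (r⁻¹ * (R1 r / q r))
        - (R1 r / q r) * (q1 r / q r)) r := by
    intro r hr
    refine ((hdR1 r).div (hd r) (hq r).ne').congr_deriv ?_
    have h1 : R2 r = R r - (1 + α) * g r * R r - r ^ 2 * q r - n / r * R1 r := by
      linarith [hodeR r hr]
    have h2 := (hq r).ne'
    rw [h1]
    field_simp
    try ring
  set θ : Fin (n+1) → EuclideanSpace ℝ (Fin (n+1)) → ℝ := fun i x => x i * ‖x‖⁻¹ with hθdef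
  set s : EuclideanSpace ℝ (Fin (n+1)) → ℝ := fun x => ‖x‖⁻¹ with hsdef
  set W : EuclideanSpace ℝ (Fin (n+1)) → ℝ := fun x => q1 ‖x‖ / q ‖x‖ with hWdef
  set γ : EuclideanSpace ℝ (Fin (n+1)) → ℝ := fun x => g ‖x‖ with hγdef
  set nr : EuclideanSpace ℝ (Fin (n+1)) → ℝ := fun x => ‖x‖ with hnrdef
  set τ : EuclideanSpace ℝ (Fin (n+1)) → ℝ := fun x => R ‖x‖ / q ‖x‖ with hτdef
  set σ : EuclideanSpace ℝ (Fin (n+1)) → ℝ := fun x => R1 ‖x‖ / q ‖x‖ with hσdef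
  set G1 : Set (EuclideanSpace ℝ (Fin (n+1)) → ℝ) := Set.range θ ∪ {s, W, γ} with hG1
  set G2 : Set (EuclideanSpace ℝ (Fin (n+1)) → ℝ) := G1 ∪ {nr, τ, σ} with hG2
  have G12 : G1 ⊆ G2 := Set.subset_union_left
  -- derivatives of the basic generators, in any algebra containing them
  have base : ∀ A : Subalgebra ℝ (EuclideanSpace ℝ (Fin (n+1)) → ℝ), G1 ⊆ (A : Set _) →
      ∀ f ∈ G1, ∀ i : Fin (n+1), ∃ d ∈ A, ∀ x, x ≠ 0 →
        DifferentiableAt ℝ f x ∧ fderiv ℝ f x (EuclideanSpace.single i (1:ℝ)) = d x := by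
    intro A hA
    have mθ : ∀ i, θ i ∈ A := fun i => hA (Or.inl ⟨i, rfl⟩)
    have ms : s ∈ A := hA (by simp [hG1])
    have mW : W ∈ A := hA (by simp [hG1])
    have mγ : γ ∈ A := hA (by simp [hG1])
    rintro f (⟨j, rfl⟩ | rfl | rfl | rfl)
    · exact al_theta A mθ ms j
    · refine al_rad A mθ (F := fun r => r⁻¹) (fun r hr => hasDerivAt_inv hr.ne')
        (D := -(s * s)) (neg_mem (mul_mem ms ms)) (fun x hx => ?_)
      simp only [hsdef, Pi.neg_apply, Pi.mul_apply]
      rw [sq, mul_inv]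
    · exact al_rad A mθ hdW
        (D := 1 - γ - W * W - (n:ℝ) • (s * W))
        (sub_mem (sub_mem (sub_mem (one_mem _) mγ) (mul_mem mW mW)) (A.smul_mem (mul_mem ms mW) _))
        (fun x hx => rfl)
    · exact al_rad A mθ (fun r _ => hdg r)
        (D := α • (γ * W)) (A.smul_mem (mul_mem mγ mW) _) (fun x hx => rfl)
  have hQd : ∀ A : Subalgebra ℝ (EuclideanSpace ℝ (Fin (n+1)) → ℝ), G1 ⊆ (A : Set _) →
      ∀ i : Fin (n+1), ∃ d ∈ A, ∀ x, x ≠ 0 →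
      fderiv ℝ Q x (EuclideanSpace.single i (1:ℝ)) = d x * Q x := by
    intro A hA i
    have mθ : θ i ∈ A := hA (Or.inl ⟨i, rfl⟩)
    have mW : W ∈ A := hA (by simp [hG1])
    refine ⟨W * θ i, mul_mem mW mθ, fun x hx => ?_⟩
    have hQ' : Q = fun x => q ‖x‖ := funext hQq
    rw [hQ', ra_comp_apply hx (hd ‖x‖) i]
    simp only [hWdef, hθdef, Pi.mul_apply]
    have := (hq ‖x‖).ne'
    field_simp
  have hQdiff : Differentiable ℝ Q := hQs.differentiable (by simp)
  have der1 := al_deriv G1 (base _ Algebra.subset_adjoin)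
  have der2 := al_deriv G2 (by
    have hsub : G2 ⊆ (Algebra.adjoin ℝ G2 : Set _) := Algebra.subset_adjoin
    set A := Algebra.adjoin ℝ G2 with hA
    have hA1 : G1 ⊆ (A : Set _) := G12.trans hsub
    have mθ : ∀ i, θ i ∈ A := fun i => hA1 (Or.inl ⟨i, rfl⟩)
    have ms : s ∈ A := hA1 (by simp [hG1])
    have mW : W ∈ A := hA1 (by simp [hG1])
    have mγ : γ ∈ A := hA1 (by simp [hG1])
    have mn : nr ∈ A := hsub (by simp [hG2])
    have mτ : τ ∈ A := hsub (by simp [hG2])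
    have mσ : σ ∈ A := hsub (by simp [hG2])
    rintro f (hf | rfl | rfl | rfl)
    · exact base A hA1 f hf
    · exact al_rad A mθ (F := fun r => r) (fun r _ => hasDerivAt_id r) (D := 1) (one_mem _)
        (fun x hx => rfl)
    · exact al_rad A mθ (fun r _ => hdτ r) (D := σ - τ * W)
        (sub_mem mσ (mul_mem mτ mW)) (fun x hx => rfl)
    · exact al_rad A mθ hdσ
        (D := τ - (1 + α) • (γ * τ) - nr * nr - (n:ℝ) • (s * σ) - σ * W)
        (sub_mem (sub_mem (sub_mem (sub_mem mτ (A.smul_mem (mul_mem mγ mτ) _)) (mul_mem mn mn))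
          (A.smul_mem (mul_mem ms mσ) _)) (mul_mem mσ mW))
        (fun x hx => rfl))
  -- bounds
  have bd1 : ∀ f ∈ G1, ∃ C, ∀ x, a ≤ ‖x‖ → |f x| ≤ C := by
    rintro f (⟨j, rfl⟩ | rfl | rfl | rfl)
    · exact ⟨1, fun x _ => ra_theta_le x j⟩
    · refine ⟨1, fun x hx => ?_⟩
      simp only [hsdef]
      rw [abs_inv, abs_norm]
      exact inv_le_one_of_one_le₀ (ha1.trans hx)
    · refine ⟨K, fun x hx => ?_⟩
      simp only [hWdef]
      rw [abs_div, abs_of_pos (hq _), div_le_iff₀ (hq _)]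
      exact hK _ (ha1.trans hx)
    · exact ⟨C0 ^ α, fun x _ => hgb _ (norm_nonneg x)⟩
  have bd2 : ∀ f ∈ G2, ∃ (C : ℝ) (k : ℕ), 0 ≤ C ∧
      ∀ x, a ≤ ‖x‖ → |f x| ≤ C * (1 + ‖x‖) ^ k := by
    have aux : ∀ x : EuclideanSpace ℝ (Fin (n+1)), ∀ y : ℝ,
        |y| ≤ CR * (‖x‖ ^ 3 * q ‖x‖) → |y / q ‖x‖| ≤ CR * (1 + ‖x‖) ^ 3 := by
      intro x y hy
      rw [abs_div, abs_of_pos (hq _), div_le_iff₀ (hq _)]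
      refine hy.trans ?_
      rw [← mul_assoc]
      have h1 := (hq ‖x‖).le
      have h2 := norm_nonneg x
      gcongr
      linarith
    rintro f (hf | rfl | rfl | rfl)
    · obtain ⟨C, hC⟩ := bd1 f hf
      exact ⟨|C|, 0, abs_nonneg _, fun x hx => by
        rw [pow_zero, mul_one]; exact (hC x hx).trans (le_abs_self _)⟩
    · refine ⟨1, 1, zero_le_one, fun x hx => ?_⟩
      simp only [hnrdef]
      rw [abs_norm]; linarith
    · exact ⟨CR, 3, hCR.le, fun x hx => aux x _ (hR _ hx).1⟩
    · exact ⟨CR, 3, hCR.le, fun x hx => aux x _ (hR _ hx).2⟩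
  have hxne : ∀ x : EuclideanSpace ℝ (Fin (n+1)), a ≤ ‖x‖ → x ≠ 0 := fun x hx =>
    norm_pos_iff.1 (by linarith)
  have hcont : ∀ (f : EuclideanSpace ℝ (Fin (n+1)) → ℝ), ContDiff ℝ (⊤ : ℕ∞) f →
      ∀ (k : ℕ) (v : Fin k → Fin (n+1)),
      Continuous fun x => iteratedFDeriv ℝ k f x
        (fun j => EuclideanSpace.single (v j) (1:ℝ)) := by
    intro f hf k v
    have h1 : Continuous (iteratedFDeriv ℝ k f) :=
      hf.continuous_iteratedFDeriv (by exact_mod_cast le_top)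
    exact (ContinuousMultilinearMap.apply ℝ (fun _ : Fin k => EuclideanSpace ℝ (Fin (n+1))) ℝ
      (fun j => EuclideanSpace.single (v j) (1:ℝ))).continuous.comp h1
  constructor
  · intro k v
    obtain ⟨P, hP, hPe⟩ := al_iter _ der1 hQdiff (hQd _ Algebra.subset_adjoin) hQs
      (P := 1) (one_mem _) (fun x _ => by simp) k v
    obtain ⟨C, hC⟩ := al_bdd G1 a bd1 P hP
    obtain ⟨C', hC', h⟩ := cp_ext (W := fun _ => 1) (hcont Q hQs k v) hQs.continuous hQ0
      (fun _ => le_rfl) (a := a) (C := C) (by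
        intro x hx
        rw [hPe x (hxne x hx), abs_mul, abs_of_pos (hQ0 x), mul_one]
        exact mul_le_mul_of_nonneg_right (hC x hx) (hQ0 x).le)
    exact ⟨C', hC', fun x => by simpa using h x⟩
  · intro k v
    have hsub : G2 ⊆ (Algebra.adjoin ℝ G2 : Set _) := Algebra.subset_adjoin
    obtain ⟨P, hP, hPe⟩ := al_iter _ der2 hQdiff (hQd _ (G12.trans hsub)) hρs
      (P := τ) (hsub (by simp [hG2]))
      (fun x _ => by
        simp only [hτdef]
        rw [hρR, hQq, div_mul_cancel₀ _ (hq _).ne']) k v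
    obtain ⟨C, l, hC0', hC⟩ := al_poly G2 a bd2 P hP
    obtain ⟨C', hC', h⟩ := cp_ext (W := fun x => (1 + ‖x‖) ^ ((l:ℝ) + 1)) (hcont (⇑ρ) hρs k v)
      hQs.continuous hQ0
      (fun x => Real.one_le_rpow (by linarith [norm_nonneg x]) (by positivity))
      (a := a) (C := C) (by
        intro x hx
        rw [hPe x (hxne x hx), abs_mul, abs_of_pos (hQ0 x)]
        refine mul_le_mul_of_nonneg_right ((hC x hx).trans ?_) (hQ0 x).le
        refine mul_le_mul_of_nonneg_left ?_ hC0'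
        rw [← Real.rpow_natCast]
        exact Real.rpow_le_rpow_of_exponent_le (by linarith [norm_nonneg x]) (by linarith))
    exact ⟨C', (l:ℝ) + 1, hC', by positivity, h⟩
end
end
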